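/- arXiv:2108.12664 — 3 statements merged into one kernel-verified Lean document; each statement's English description precedes it below -/
import Mathlib

section
/- For every m > 0 and every constant C > 2/(4π)² there exists D ≥ 0 such that for all ε ∈ (0,1], all x ∈ ℝ² and all z ∈ εℤ², |G_ε(x,z)| ≤ C·log₊( 1/( min( √(|x|²+|z|²), ε ) ) ) + D. -/
open MeasureTheory

/-- The lattice symbol `σ_ε(k) = (4/ε²)(sin²(εk₁/2) + sin²(εk₂/2))`. -/
noncomputable def sigmaEps (ε : ℝ) (k : ℝ × ℝ) : ℝ :=
  (4 / ε ^ 2) * (Real.sin (ε * k.1 / 2) ^ 2 + Real.sin (ε * k.2 / 2) ^ 2)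

/-- The lattice Green function `G_ε` of `(m² - Δ_{ℝ²} - Δ_{εℤ²})²` on `ℝ² × εℤ²`:
`G_ε(x,z) = (2π)⁻⁴ ∫_{ℝ²} ∫_{[-π/ε,π/ε]²} e^{-i(x·y + z·k)} (|y|² + σ_ε(k) + m²)⁻² dk dy`. -/
noncomputable def latticeGreen (m ε : ℝ) (x z : ℝ × ℝ) : ℂ :=
  ((1 / (2 * Real.pi) ^ 4 : ℝ) : ℂ) *
    ∫ y : ℝ × ℝ,
      ∫ k in (Set.Icc (-(Real.pi / ε)) (Real.pi / ε) ×ˢ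
              Set.Icc (-(Real.pi / ε)) (Real.pi / ε)),
        Complex.exp (-Complex.I * ((x.1 * y.1 + x.2 * y.2) + (z.1 * k.1 + z.2 * k.2))) /
          ((((y.1 ^ 2 + y.2 ^ 2) + sigmaEps ε k + m ^ 2) ^ 2 : ℝ) : ℂ)

/-!
Since `min r ε ≤ ε`, it suffices to bound `|G_ε|` by `C log (1 / ε) + D`, and this bound already
holds for the integral of the absolute value. Integrating out `y` turns the squared resolvent
into `π / (σ_ε(k) + m²)`. On the Brillouin zone `t ≤ tan t` gives
`1 / (σ_ε(k) + m²) ≤ 1 / (|k|² + m²) + ε² / 4`. The area of the zone is `(2π / ε)²`, so the error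
term contributes only a constant, while the main term, integrated over the circumscribed disc,
gives at most `π log (1 + 2π² / (ε m)²)`, which is `2π log (1 / ε)` up to a constant.
-/

section PlaneIntegrals

open Real Set
open scoped ENNReal

theorem lintegral_comp_sq_Ioi (g : ℝ → ℝ≥0∞) :
    ∫⁻ r in Ioi 0, ENNReal.ofReal (2 * r) * g (r ^ 2) = ∫⁻ s in Ioi 0, g s := by
  have image_sq : (fun r : ℝ ↦ r ^ 2) '' Ioi 0 = Ioi 0 := by
    ext s
    refine ⟨?_, fun hs ↦ ⟨√s, sqrt_pos.2 hs, sq_sqrt (le_of_lt hs)⟩⟩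
    rintro ⟨r, hr, rfl⟩
    exact pow_pos (mem_Ioi.1 hr) 2
  have hderiv : ∀ r ∈ Ioi (0 : ℝ), HasDerivWithinAt (fun r : ℝ ↦ r ^ 2) (2 * r) (Ioi 0) r :=
    fun r _ ↦ by simpa using (hasDerivAt_pow 2 r).hasDerivWithinAt
  have hmono : MonotoneOn (fun r : ℝ ↦ r ^ 2) (Ioi 0) :=
    fun r hr s _ hrs ↦ pow_le_pow_left₀ (le_of_lt hr) hrs 2
  rw [← lintegral_image_eq_lintegral_deriv_mul_of_monotoneOn measurableSet_Ioi hderiv hmono,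
    image_sq]

theorem lintegral_comp_sq_add_sq {g : ℝ → ℝ≥0∞} (hg : Measurable g) :
    ∫⁻ p : ℝ × ℝ, g (p.1 ^ 2 + p.2 ^ 2) = ENNReal.ofReal π * ∫⁻ s in Ioi 0, g s := by
  have polar_integrand (p : ℝ × ℝ) : ENNReal.ofReal p.1 •
      g ((polarCoord.symm p).1 ^ 2 + (polarCoord.symm p).2 ^ 2) =
        ENNReal.ofReal p.1 * g (p.1 ^ 2) * 1 := by
    have : (p.1 * cos p.2) ^ 2 + (p.1 * sin p.2) ^ 2 = p.1 ^ 2 := by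
      linear_combination p.1 ^ 2 * sin_sq_add_cos_sq p.2
    simp [polarCoord_symm_apply, this]
  calc ∫⁻ p : ℝ × ℝ, g (p.1 ^ 2 + p.2 ^ 2)
      = ∫⁻ p in Ioi (0 : ℝ) ×ˢ Ioo (-π) π, ENNReal.ofReal p.1 * g (p.1 ^ 2) * 1 := by
        rw [← lintegral_comp_polarCoord_symm fun p : ℝ × ℝ ↦ g (p.1 ^ 2 + p.2 ^ 2)]
        simp_rw [polar_integrand]
        rfl
    _ = (∫⁻ r in Ioi 0, ENNReal.ofReal r * g (r ^ 2)) * ENNReal.ofReal (2 * π) := by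
        rw [Measure.volume_eq_prod, ← Measure.prod_restrict,
          lintegral_prod_mul (f := fun r ↦ ENNReal.ofReal r * g (r ^ 2)) (g := fun _ ↦ 1)
            (by fun_prop) (by fun_prop), setLIntegral_const, Real.volume_Ioo, one_mul,
          sub_neg_eq_add, two_mul]
    _ = ENNReal.ofReal π * ∫⁻ r in Ioi 0, ENNReal.ofReal (2 * r) * g (r ^ 2) := by
        simp_rw [ENNReal.ofReal_mul zero_le_two, mul_assoc]
        rw [lintegral_const_mul _ (by fun_prop)]
        ring
    _ = ENNReal.ofReal π * ∫⁻ s in Ioi 0, g s := by rw [lintegral_comp_sq_Ioi]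

theorem setLIntegral_disc_comp_sq_add_sq {g : ℝ → ℝ≥0∞} (hg : Measurable g) (R : ℝ) :
    ∫⁻ p : ℝ × ℝ in {p | p.1 ^ 2 + p.2 ^ 2 ≤ R}, g (p.1 ^ 2 + p.2 ^ 2) =
      ENNReal.ofReal π * ∫⁻ s in Ioc 0 R, g s := by
  rw [← lintegral_indicator (measurableSet_le (by fun_prop) measurable_const), ← Ioi_inter_Iic,
    inter_comm, ← setLIntegral_indicator measurableSet_Iic,
    ← lintegral_comp_sq_add_sq (hg.indicator measurableSet_Iic)]
  rfl

variable {a : ℝ}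

theorem setLIntegral_Ioi_inv_add_sq (ha : 0 < a) :
    ∫⁻ s in Ioi 0, ENNReal.ofReal ((s + a) ^ 2)⁻¹ = ENNReal.ofReal a⁻¹ := by
  have hderiv : ∀ s ∈ Ici (0 : ℝ),
      HasDerivAt (fun s : ℝ ↦ -(s + a)⁻¹) ((s + a) ^ 2)⁻¹ s := fun s hs ↦ by
    have hsa : s + a ≠ 0 := (add_pos_of_nonneg_of_pos hs ha).ne'
    exact (((hasDerivAt_id' s).add_const a).inv hsa).neg.congr_deriv (by ring)
  have hnonneg : ∀ s ∈ Ioi (0 : ℝ), 0 ≤ ((s + a) ^ 2)⁻¹ := fun s _ ↦ by positivity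
  have hlim : Filter.Tendsto (fun s : ℝ ↦ -(s + a)⁻¹) Filter.atTop (nhds 0) := by
    simpa using (tendsto_inv_atTop_zero.comp
      (Filter.tendsto_atTop_add_const_right _ a Filter.tendsto_id)).neg
  rw [← ofReal_integral_eq_lintegral_ofReal
      (integrableOn_Ioi_deriv_of_nonneg' hderiv hnonneg hlim)
      (ae_restrict_of_forall_mem measurableSet_Ioi hnonneg),
    integral_Ioi_of_hasDerivAt_of_nonneg' hderiv hnonneg hlim]
  simp

theorem setLIntegral_Ioc_inv_add {R : ℝ} (ha : 0 < a) (hR : 0 ≤ R) :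
    ∫⁻ s in Ioc 0 R, ENNReal.ofReal (s + a)⁻¹ = ENNReal.ofReal (log (1 + R / a)) := by
  have hcont : ContinuousOn (fun s : ℝ ↦ (s + a)⁻¹) (Icc 0 R) :=
    ContinuousOn.inv₀ (by fun_prop) fun s hs ↦ (add_pos_of_nonneg_of_pos hs.1 ha).ne'
  rw [← ofReal_integral_eq_lintegral_ofReal
      (hcont.integrableOn_Icc.mono_set Ioc_subset_Icc_self)
      (ae_restrict_of_forall_mem measurableSet_Ioc fun s hs ↦
        inv_nonneg.2 (add_pos hs.1 ha).le),
    ← intervalIntegral.integral_of_le hR,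
    intervalIntegral.integral_comp_add_right (fun s ↦ s⁻¹), zero_add,
    integral_inv_of_pos ha (by positivity), add_div, div_self ha.ne', add_comm]

theorem lintegral_inv_sq_add_sq_add_sq (ha : 0 < a) :
    ∫⁻ y : ℝ × ℝ, ENNReal.ofReal ((y.1 ^ 2 + y.2 ^ 2 + a) ^ 2)⁻¹ = ENNReal.ofReal (π / a) := by
  rw [lintegral_comp_sq_add_sq (g := fun s ↦ ENNReal.ofReal ((s + a) ^ 2)⁻¹) (by fun_prop),
    setLIntegral_Ioi_inv_add_sq ha, ← ENNReal.ofReal_mul pi_nonneg, div_eq_mul_inv]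

theorem setLIntegral_disc_inv_sq_add_sq_add {R : ℝ} (ha : 0 < a) (hR : 0 ≤ R) :
    ∫⁻ k : ℝ × ℝ in {k | k.1 ^ 2 + k.2 ^ 2 ≤ R}, ENNReal.ofReal (k.1 ^ 2 + k.2 ^ 2 + a)⁻¹ =
      ENNReal.ofReal (π * log (1 + R / a)) := by
  rw [setLIntegral_disc_comp_sq_add_sq (g := fun s ↦ ENNReal.ofReal (s + a)⁻¹) (by fun_prop),
    setLIntegral_Ioc_inv_add ha hR, ← ENNReal.ofReal_mul pi_nonneg]

end PlaneIntegrals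

section Symbol

open Real Set

theorem sq_div_one_add_sq_le_sin_sq {t : ℝ} (ht : |t| ≤ π / 2) :
    t ^ 2 / (1 + t ^ 2) ≤ sin t ^ 2 := by
  obtain ⟨hlower, hupper⟩ := abs_le.1 ht
  have hcos : cos t ^ 2 ≤ (1 / √(t ^ 2 + 1)) ^ 2 :=
    pow_le_pow_left₀ (cos_nonneg_of_mem_Icc ⟨by linarith, hupper⟩)
      (cos_le_one_div_sqrt_sq_add_one (by linarith [pi_pos]) (by linarith [pi_pos])) 2
  rw [div_pow, sq_sqrt (by positivity), one_pow] at hcos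
  have : t ^ 2 / (1 + t ^ 2) = 1 - 1 / (t ^ 2 + 1) := by field_simp; ring
  linarith [sin_sq_add_cos_sq t]

theorem add_div_one_add_add_le {u v : ℝ} (hu : 0 ≤ u) (hv : 0 ≤ v) :
    (u + v) / (1 + (u + v)) ≤ u / (1 + u) + v / (1 + v) := by
  rw [add_div]
  gcongr <;> linarith

theorem inv_add_le_inv_add_add {a c P σ : ℝ} (ha : 0 < a) (hc : 0 ≤ c) (hP : 0 ≤ P)
    (hσ : P / (1 + c * P) ≤ σ) : (σ + a)⁻¹ ≤ (P + a)⁻¹ + c := by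
  have hlower : (P + a) / (1 + c * P) ≤ σ + a := by
    rw [add_div]
    gcongr
    exact div_le_self ha.le (by nlinarith)
  calc (σ + a)⁻¹ ≤ ((P + a) / (1 + c * P))⁻¹ := inv_anti₀ (by positivity) hlower
    _ = (P + a)⁻¹ + c * (P / (P + a)) := by field_simp
    _ ≤ (P + a)⁻¹ + c := by
        gcongr
        exact mul_le_of_le_one_right hc (div_le_one_of_le₀ (by linarith) (by positivity))

/-- The Brillouin zone `[-π/ε, π/ε]²` of the lattice `εℤ²`, over which `k` is integrated. -/
def brillouinZone (ε : ℝ) : Set (ℝ × ℝ) :=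
  Icc (-(π / ε)) (π / ε) ×ˢ Icc (-(π / ε)) (π / ε)

variable {ε : ℝ}

theorem measurableSet_brillouinZone : MeasurableSet (brillouinZone ε) :=
  measurableSet_Icc.prod measurableSet_Icc

theorem brillouinZone_subset_disc :
    brillouinZone ε ⊆ {k | k.1 ^ 2 + k.2 ^ 2 ≤ 2 * (π / ε) ^ 2} := fun k hk ↦ by
  have h₁ : k.1 ^ 2 ≤ (π / ε) ^ 2 := sq_le_sq' hk.1.1 hk.1.2
  have h₂ : k.2 ^ 2 ≤ (π / ε) ^ 2 := sq_le_sq' hk.2.1 hk.2.2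
  change k.1 ^ 2 + k.2 ^ 2 ≤ 2 * (π / ε) ^ 2
  linarith

theorem volume_brillouinZone (hε : 0 < ε) :
    volume (brillouinZone ε) = ENNReal.ofReal ((2 * π / ε) ^ 2) := by
  rw [brillouinZone, Measure.volume_eq_prod, Measure.prod_prod, Real.volume_Icc,
    ← ENNReal.ofReal_mul (by rw [sub_neg_eq_add]; positivity)]
  ring_nf

theorem abs_mul_div_two_le_of_mem_Icc (hε : 0 < ε) {κ : ℝ} (hκ : κ ∈ Icc (-(π / ε)) (π / ε)) :
    |ε * κ / 2| ≤ π / 2 := by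
  have : |κ| * ε ≤ π := (le_div_iff₀ hε).1 (abs_le.2 hκ)
  rw [abs_div, abs_mul, abs_of_pos hε, abs_two]
  linarith

theorem sigmaEps_nonneg (ε : ℝ) (k : ℝ × ℝ) : 0 ≤ sigmaEps ε k := by
  unfold sigmaEps
  positivity

@[fun_prop]
theorem measurable_sigmaEps (ε : ℝ) : Measurable (sigmaEps ε) := by
  unfold sigmaEps
  fun_prop

theorem div_one_add_le_sigmaEps (hε : 0 < ε) {k : ℝ × ℝ} (hk : k ∈ brillouinZone ε) :
    (k.1 ^ 2 + k.2 ^ 2) / (1 + ε ^ 2 / 4 * (k.1 ^ 2 + k.2 ^ 2)) ≤ sigmaEps ε k := by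
  set u := (ε * k.1 / 2) ^ 2 with hu
  set v := (ε * k.2 / 2) ^ 2 with hv
  have hsum : ε ^ 2 / 4 * (k.1 ^ 2 + k.2 ^ 2) = u + v := by rw [hu, hv]; ring
  calc (k.1 ^ 2 + k.2 ^ 2) / (1 + ε ^ 2 / 4 * (k.1 ^ 2 + k.2 ^ 2))
      = 4 / ε ^ 2 * ((u + v) / (1 + (u + v))) := by rw [← hsum]; field_simp
    _ ≤ 4 / ε ^ 2 * (u / (1 + u) + v / (1 + v)) := by
        gcongr
        exact add_div_one_add_add_le (sq_nonneg _) (sq_nonneg _)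
    _ ≤ sigmaEps ε k := by
        unfold sigmaEps
        gcongr
        · exact sq_div_one_add_sq_le_sin_sq (abs_mul_div_two_le_of_mem_Icc hε hk.1)
        · exact sq_div_one_add_sq_le_sin_sq (abs_mul_div_two_le_of_mem_Icc hε hk.2)

theorem inv_sigmaEps_add_le {a : ℝ} (ha : 0 < a) (hε : 0 < ε) {k : ℝ × ℝ}
    (hk : k ∈ brillouinZone ε) :
    (sigmaEps ε k + a)⁻¹ ≤ (k.1 ^ 2 + k.2 ^ 2 + a)⁻¹ + ε ^ 2 / 4 :=
  inv_add_le_inv_add_add ha (by positivity) (by positivity) (div_one_add_le_sigmaEps hε hk)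

theorem setLIntegral_brillouinZone_inv_sigmaEps_add_le {a : ℝ} (ha : 0 < a) (hε : 0 < ε) :
    ∫⁻ k in brillouinZone ε, ENNReal.ofReal (sigmaEps ε k + a)⁻¹ ≤
      ENNReal.ofReal (π * log (1 + 2 * (π / ε) ^ 2 / a) + π ^ 2) := by
  have hlog : 0 ≤ log (1 + 2 * (π / ε) ^ 2 / a) :=
    log_nonneg (le_add_of_nonneg_right (by positivity))
  have error_term : ENNReal.ofReal (ε ^ 2 / 4) * volume (brillouinZone ε) =
      ENNReal.ofReal (π ^ 2) := by
    rw [volume_brillouinZone hε, ← ENNReal.ofReal_mul (by positivity)]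
    congr 1
    field_simp
    ring
  calc ∫⁻ k in brillouinZone ε, ENNReal.ofReal (sigmaEps ε k + a)⁻¹
      ≤ ∫⁻ k in brillouinZone ε,
          (ENNReal.ofReal (k.1 ^ 2 + k.2 ^ 2 + a)⁻¹ + ENNReal.ofReal (ε ^ 2 / 4)) := by
        refine setLIntegral_mono' measurableSet_brillouinZone fun k hk ↦ ?_
        rw [← ENNReal.ofReal_add (by positivity) (by positivity)]
        exact ENNReal.ofReal_le_ofReal (inv_sigmaEps_add_le ha hε hk)
    _ = (∫⁻ k in brillouinZone ε, ENNReal.ofReal (k.1 ^ 2 + k.2 ^ 2 + a)⁻¹) +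
          ENNReal.ofReal (π ^ 2) := by
        rw [lintegral_add_right _ measurable_const, setLIntegral_const, error_term]
    _ ≤ (∫⁻ k in {k : ℝ × ℝ | k.1 ^ 2 + k.2 ^ 2 ≤ 2 * (π / ε) ^ 2},
          ENNReal.ofReal (k.1 ^ 2 + k.2 ^ 2 + a)⁻¹) + ENNReal.ofReal (π ^ 2) := by
        gcongr
        exact brillouinZone_subset_disc
    _ = ENNReal.ofReal (π * log (1 + 2 * (π / ε) ^ 2 / a) + π ^ 2) := by
        rw [setLIntegral_disc_inv_sq_add_sq_add ha (by positivity),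
          ENNReal.ofReal_add (by positivity) (by positivity)]

end Symbol

section GreenFunction

open Real Set

theorem enorm_exp_neg_I_mul_div (t : ℝ) {s : ℝ} (hs : 0 ≤ s) :
    ‖Complex.exp (-Complex.I * t) / (s : ℂ)‖ₑ = ENNReal.ofReal s⁻¹ := by
  rw [← ofReal_norm, norm_div, Complex.norm_real, norm_of_nonneg hs, ← one_div,
    show -Complex.I * t = ((-t : ℝ) : ℂ) * Complex.I by push_cast; ring,
    Complex.norm_exp_ofReal_mul_I]

variable {m ε : ℝ}

theorem enorm_latticeGreen_le_lintegral (hm : m ≠ 0) (x z : ℝ × ℝ) :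
    ‖latticeGreen m ε x z‖ₑ ≤ ENNReal.ofReal (1 / (2 * π) ^ 4) *
      ∫⁻ k in brillouinZone ε, ENNReal.ofReal (π / (sigmaEps ε k + m ^ 2)) := by
  have enorm_integrand (y k : ℝ × ℝ) :
      ‖Complex.exp (-Complex.I * ((x.1 * y.1 + x.2 * y.2) + (z.1 * k.1 + z.2 * k.2))) /
          ((((y.1 ^ 2 + y.2 ^ 2) + sigmaEps ε k + m ^ 2) ^ 2 : ℝ) : ℂ)‖ₑ =
        ENNReal.ofReal ((y.1 ^ 2 + y.2 ^ 2 + (sigmaEps ε k + m ^ 2)) ^ 2)⁻¹ := by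
    rw [add_assoc (y.1 ^ 2 + y.2 ^ 2)]
    have := enorm_exp_neg_I_mul_div ((x.1 * y.1 + x.2 * y.2) + (z.1 * k.1 + z.2 * k.2))
      (sq_nonneg (y.1 ^ 2 + y.2 ^ 2 + (sigmaEps ε k + m ^ 2)))
    push_cast at this ⊢
    exact this
  have hmass (k : ℝ × ℝ) : 0 < sigmaEps ε k + m ^ 2 :=
    add_pos_of_nonneg_of_pos (sigmaEps_nonneg ε k) (by positivity)
  rw [latticeGreen, enorm_mul, ← ofReal_norm, Complex.norm_real, norm_of_nonneg (by positivity)]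
  gcongr
  calc _ ≤ ∫⁻ y : ℝ × ℝ, ∫⁻ k in brillouinZone ε,
          ENNReal.ofReal ((y.1 ^ 2 + y.2 ^ 2 + (sigmaEps ε k + m ^ 2)) ^ 2)⁻¹ := by
        refine (enorm_integral_le_lintegral_enorm _).trans (lintegral_mono fun y ↦ ?_)
        refine (enorm_integral_le_lintegral_enorm _).trans_eq ?_
        simp_rw [enorm_integrand]
        rfl
    _ = ∫⁻ k in brillouinZone ε, ∫⁻ y : ℝ × ℝ,
          ENNReal.ofReal ((y.1 ^ 2 + y.2 ^ 2 + (sigmaEps ε k + m ^ 2)) ^ 2)⁻¹ :=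
        lintegral_lintegral_swap (by simp only [Function.uncurry_def]; fun_prop)
    _ = ∫⁻ k in brillouinZone ε, ENNReal.ofReal (π / (sigmaEps ε k + m ^ 2)) :=
        lintegral_congr fun k ↦ lintegral_inv_sq_add_sq_add_sq (hmass k)

theorem norm_latticeGreen_le (hm : m ≠ 0) (hε : 0 < ε) (x z : ℝ × ℝ) :
    ‖latticeGreen m ε x z‖ ≤ (log (1 + 2 * (π / ε) ^ 2 / m ^ 2) + π) / (4 * π) ^ 2 := by
  have hlog : 0 ≤ log (1 + 2 * (π / ε) ^ 2 / m ^ 2) :=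
    log_nonneg (le_add_of_nonneg_right (by positivity))
  rw [← ENNReal.ofReal_le_ofReal_iff (by positivity), ofReal_norm]
  calc ‖latticeGreen m ε x z‖ₑ
      ≤ ENNReal.ofReal (1 / (2 * π) ^ 4) *
          ∫⁻ k in brillouinZone ε, ENNReal.ofReal (π / (sigmaEps ε k + m ^ 2)) :=
        enorm_latticeGreen_le_lintegral hm x z
    _ = ENNReal.ofReal (1 / (2 * π) ^ 4) * (ENNReal.ofReal π *
          ∫⁻ k in brillouinZone ε, ENNReal.ofReal (sigmaEps ε k + m ^ 2)⁻¹) := by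
        simp_rw [div_eq_mul_inv π, ENNReal.ofReal_mul pi_nonneg]
        rw [lintegral_const_mul _ (by fun_prop)]
    _ ≤ ENNReal.ofReal (1 / (2 * π) ^ 4) * (ENNReal.ofReal π *
          ENNReal.ofReal (π * log (1 + 2 * (π / ε) ^ 2 / m ^ 2) + π ^ 2)) := by
        gcongr
        exact setLIntegral_brillouinZone_inv_sigmaEps_add_le (by positivity) hε
    _ = ENNReal.ofReal ((log (1 + 2 * (π / ε) ^ 2 / m ^ 2) + π) / (4 * π) ^ 2) := by
        rw [← ENNReal.ofReal_mul pi_nonneg, ← ENNReal.ofReal_mul (by positivity)]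
        congr 1
        field_simp
        ring

theorem log_one_add_div_sq_le {A : ℝ} (hA : 0 ≤ A) (hε : ε ∈ Ioc 0 1) :
    log (1 + A / ε ^ 2) ≤ 2 * log (1 / ε) + log (1 + A) := by
  have hε₀ : 0 < ε := hε.1
  have hinv : 1 ≤ (1 / ε) ^ 2 := one_le_pow₀ (one_le_one_div hε₀ hε.2)
  calc log (1 + A / ε ^ 2) ≤ log ((1 / ε) ^ 2 * (1 + A)) := by
        refine log_le_log (by positivity) ?_
        rw [mul_one_add, show A / ε ^ 2 = (1 / ε) ^ 2 * A by ring]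
        gcongr
    _ = 2 * log (1 / ε) + log (1 + A) := by
        rw [log_mul (by positivity) (by positivity), log_pow, Nat.cast_ofNat]

theorem lattice_radius_pos (hε : ε ≠ 0) {x : ℝ × ℝ} {n : ℤ × ℤ} (h : x ≠ 0 ∨ n ≠ 0) :
    0 < √(x.1 ^ 2 + x.2 ^ 2 + (ε * (n.1 : ℝ)) ^ 2 + (ε * (n.2 : ℝ)) ^ 2) := by
  have coord_ne_zero : x.1 ≠ 0 ∨ x.2 ≠ 0 ∨ ε * (n.1 : ℝ) ≠ 0 ∨ ε * (n.2 : ℝ) ≠ 0 := by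
    contrapose! h
    simpa [Prod.ext_iff, hε, and_assoc] using h
  refine sqrt_pos.2 ?_
  rcases coord_ne_zero with h | h | h | h <;> positivity

theorem log_one_div_le_max_log_one_div_min {r : ℝ} (hr : 0 < r) (hε : 0 < ε) :
    log (1 / ε) ≤ max (log (1 / min r ε)) 0 :=
  le_max_of_le_left (log_le_log (by positivity)
    (one_div_le_one_div_of_le (lt_min hr hε) (min_le_right r ε)))

theorem stmt_1_general (hm : m ≠ 0) :
    ∃ D : ℝ, 0 ≤ D ∧ ∀ ε ∈ Ioc (0 : ℝ) 1, ∀ x z : ℝ × ℝ,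
      ‖latticeGreen m ε x z‖ ≤ 2 / (4 * π) ^ 2 * log (1 / ε) + D := by
  have hlog : 0 ≤ log (1 + 2 * (π / m) ^ 2) := log_nonneg (le_add_of_nonneg_right (by positivity))
  refine ⟨(log (1 + 2 * (π / m) ^ 2) + π) / (4 * π) ^ 2, by positivity, fun ε hε x z ↦ ?_⟩
  calc ‖latticeGreen m ε x z‖ ≤ (log (1 + 2 * (π / ε) ^ 2 / m ^ 2) + π) / (4 * π) ^ 2 :=
        norm_latticeGreen_le hm hε.1 x z
    _ = (log (1 + 2 * (π / m) ^ 2 / ε ^ 2) + π) / (4 * π) ^ 2 := by ring_nf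
    _ ≤ (2 * log (1 / ε) + log (1 + 2 * (π / m) ^ 2) + π) / (4 * π) ^ 2 := by
        gcongr
        exact log_one_add_div_sq_le (by positivity) hε
    _ = 2 / (4 * π) ^ 2 * log (1 / ε) + (log (1 + 2 * (π / m) ^ 2) + π) / (4 * π) ^ 2 := by ring

end GreenFunction

/-- Theorem 3.2: for every `m > 0` and `C > 2/(4π)²` there is `D ≥ 0` such that, for all
`ε ∈ (0,1]`, `x ∈ ℝ²` and `z = (εn₁, εn₂) ∈ εℤ²` (with `(x,z) ≠ 0`, where the claimed
bound is trivially `+∞` otherwise),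
`|G_ε(x,z)| ≤ C log₊(1/(min(√(|x|²+|z|²), ε))) + D`. -/
theorem stmt_1 (m : ℝ) (hm : 0 < m) (C : ℝ) (hC : 2 / (4 * Real.pi) ^ 2 < C) :
    ∃ D : ℝ, 0 ≤ D ∧
      ∀ ε : ℝ, ε ∈ Set.Ioc (0 : ℝ) 1 → ∀ x : ℝ × ℝ, ∀ n : ℤ × ℤ,
        (x ≠ 0 ∨ n ≠ 0) →
        ‖latticeGreen m ε x (ε * (n.1 : ℝ), ε * (n.2 : ℝ))‖ ≤
          C * max (Real.log (1 /
              min (Real.sqrt (x.1 ^ 2 + x.2 ^ 2 + (ε * (n.1 : ℝ)) ^ 2 + (ε * (n.2 : ℝ)) ^ 2))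
                ε)) 0 + D := by
  obtain ⟨D, hD, hbound⟩ := stmt_1_general hm.ne'
  refine ⟨D, hD, fun ε hε x n hxn ↦ (hbound ε hε x _).trans ?_⟩
  gcongr ?_ + D
  exact mul_le_mul hC.le
    (log_one_div_le_max_log_one_div_min (lattice_radius_pos hε.1.ne' hxn) hε.1)
    (Real.log_nonneg (one_le_one_div hε.1 hε.2)) ((by positivity : (0 : ℝ) ≤ _).trans hC.le)
end

section
/- For every m > 0 and every constant C > 2/(4π)² there exists D ≥ 0, independent of ε, such that for all ε ∈ (0,1] and all (x,z) ∈ ℝ² × ℝ², |Ḡ_ε(x,z)| ≤ C·log₊( 1/( max( √(|x|²+|z|²), ε ) ) ) + D. -/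
open MeasureTheory

/-- The extended lattice Green function
`Ḡ_ε(x,z) = (2π)⁻⁴ ∫_{ℝ⁴} [sin²(εk₁/2)sin²(εk₂/2)/(ε⁴k₁²k₂²)] e^{-i(x·y+z·k)}
(|y|² + σ_ε(k) + m²)⁻² dy dk`. -/
noncomputable def GbarEps (m ε : ℝ) (x z : ℝ × ℝ) : ℂ :=
  ((1 / (2 * Real.pi) ^ 4 : ℝ) : ℂ) *
    ∫ y : ℝ × ℝ, ∫ k : ℝ × ℝ,
      ((Real.sin (ε * k.1 / 2) ^ 2 * Real.sin (ε * k.2 / 2) ^ 2 /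
          (ε ^ 4 * k.1 ^ 2 * k.2 ^ 2) : ℝ) : ℂ) *
        Complex.exp (-Complex.I * ((x.1 * y.1 + x.2 * y.2) + (z.1 * k.1 + z.2 * k.2))) /
        ((((y.1 ^ 2 + y.2 ^ 2) + sigmaEps ε k + m ^ 2) ^ 2 : ℝ) : ℂ)

/-!
Since `A⁻² = ∫₀^∞ t e^{-At} dt`, the kernel `Ḡ_ε(x, z)` is the integral over the proper time `t`
of `t e^{-m²t}` times four one-dimensional heat kernels: two continuous ones at `x₁`, `x₂`, and
(up to a factor `1/4`) two lattice ones at `z₁`, `z₂`, interpolated to all of `ℝ` by the factors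
`sin² / k²`. Each kernel is at most `(4πt)^{-1/2}` and at most the inverse of its spatial argument;
the lattice kernels are also at most `ε⁻¹`. Put `ρ = min (N / 2) 1` with
`N = max √(|x|² + |z|²) ε`. For `t > ρ²` the integrand is at most `(4π)⁻² e^{-m²t} / t`, which
integrates to `2 (4π)⁻² log (1 / ρ) + O(1)`. For `t ≤ ρ²` one of the four kernels is at most
`1 / ρ`, so that the integrand is at most `1 / (ρ √t)`, whose integral over `(0, ρ²]` is bounded.
-/

open Real Set
open scoped FourierTransform

section Fourier

variable {E : Type*} [NormedAddCommGroup E] [NormedSpace ℂ E]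

theorem norm_fourier_le_integral_norm (f : ℝ → E) (ξ : ℝ) : ‖𝓕 f ξ‖ ≤ ∫ v, ‖f v‖ :=
  VectorFourier.norm_fourierIntegral_le_integral_norm _ _ _ _ _

theorem abs_mul_norm_fourier_le {f : ℝ → E} (hf : Integrable f) (hdiff : Differentiable ℝ f)
    (hf' : Integrable (deriv f)) (ξ : ℝ) :
    |ξ| * ‖𝓕 f ξ‖ ≤ (2 * π)⁻¹ * ∫ v, ‖deriv f v‖ := by
  have h := norm_fourier_le_integral_norm (deriv f) ξ
  rw [fourier_deriv hf hdiff hf', norm_smul] at h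
  have hnorm : ‖(2 * π * Complex.I * ξ : ℂ)‖ = 2 * π * |ξ| := by
    simp [abs_of_pos pi_pos]
  rw [hnorm, mul_assoc] at h
  rwa [le_inv_mul_iff₀ two_pi_pos]

theorem integral_comp_mul_mul_cexp {c : ℝ} (hc : 0 < c) (f : ℝ → ℂ) (x : ℝ) :
    ∫ y : ℝ, f (c / (2 * π) * y) * Complex.exp (-Complex.I * (x * y)) =
      ((2 * π / c : ℝ) : ℂ) * 𝓕 f (x / c) := by
  have hrescale (y : ℝ) : Complex.exp (-Complex.I * (x * y)) =
      Complex.exp (((-2 * π * (c / (2 * π) * y) * (x / c) : ℝ) : ℂ) * Complex.I) := by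
    congr 1
    have : (-2 * π * (c / (2 * π) * y) * (x / c) : ℝ) = -(x * y) := by field_simp
    rw [this]
    push_cast
    ring
  simp only [hrescale]
  rw [Measure.integral_comp_mul_left
      (fun v ↦ f v * Complex.exp (((-2 * π * v * (x / c) : ℝ) : ℂ) * Complex.I)),
    fourier_real_eq_integral_exp_smul, abs_of_pos (by positivity), inv_div, Complex.real_smul]
  simp only [smul_eq_mul, mul_comm]

end Fourier

section Sinc

theorem mul_sinc (x : ℝ) : x * sinc x = sin x := by
  rcases eq_or_ne x 0 with rfl | hx
  · simp
  · rw [sinc_of_ne_zero hx, mul_div_cancel₀ _ hx]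

theorem one_sub_sq_div_two_le_sinc (x : ℝ) : 1 - x ^ 2 / 2 ≤ sinc x := by
  wlog hx : 0 < x generalizing x
  · rcases (not_lt.mp hx).eq_or_lt with rfl | hneg
    · simp
    · simpa using this (-x) (neg_pos.mpr hneg)
  rw [sinc_of_ne_zero hx.ne', le_div_iff₀ hx]
  nlinarith [sin_gt_sub_cube hx, pow_pos hx 3]

theorem hasDerivAt_sinc (x : ℝ) : HasDerivAt sinc ((cos x - sinc x) / x) x := by
  rcases eq_or_ne x 0 with rfl | hx
  · rw [div_zero, hasDerivAt_iff_isLittleO]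
    have hbound : (fun x ↦ sinc x - sinc 0 - (x - 0) • (0 : ℝ)) =O[nhds 0] fun x ↦ x ^ 2 := by
      refine .of_bound 1 (.of_forall fun x ↦ ?_)
      have hlower := one_sub_sq_div_two_le_sinc x
      have hupper := sinc_le_one x
      simp only [sinc_zero, smul_zero, sub_zero, norm_eq_abs, one_mul, abs_pow, sq_abs]
      exact abs_le.mpr ⟨by nlinarith, by nlinarith⟩
    simpa using hbound.trans_isLittleO (Asymptotics.isLittleO_pow_id one_lt_two)
  · have hquot : HasDerivAt (fun y ↦ sin y / y) ((cos x - sinc x) / x) x := by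
      refine ((hasDerivAt_sin x).div (hasDerivAt_id' x) hx).congr_deriv ?_
      rw [sinc_of_ne_zero hx]
      field_simp
    refine hquot.congr_of_eventuallyEq ?_
    filter_upwards [isOpen_ne.mem_nhds hx] with y hy using sinc_of_ne_zero hy

theorem deriv_sinc (x : ℝ) : deriv sinc x = (cos x - sinc x) / x := (hasDerivAt_sinc x).deriv

theorem differentiable_sinc : Differentiable ℝ sinc := fun x ↦ (hasDerivAt_sinc x).differentiableAt

theorem abs_cos_sub_sinc_le_two (x : ℝ) : |cos x - sinc x| ≤ 2 :=
  (abs_sub _ _).trans (by linarith [abs_cos_le_one x, abs_sinc_le_one x])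

theorem abs_deriv_sinc_le_one (x : ℝ) : |deriv sinc x| ≤ 1 := by
  rw [deriv_sinc, abs_div]
  refine div_le_one_of_le₀ ?_ (abs_nonneg x)
  rcases le_total |x| 2 with hx | hx
  · have hsq : x ^ 2 / 2 ≤ |x| := by nlinarith [sq_abs x, abs_nonneg x]
    rw [abs_le]
    constructor <;> linarith [one_sub_sq_div_two_le_cos (x := x), cos_le_one x,
      one_sub_sq_div_two_le_sinc x, sinc_le_one x]
  · exact (abs_cos_sub_sinc_le_two x).trans hx

theorem abs_mul_deriv_sinc_le_two (x : ℝ) : |x * deriv sinc x| ≤ 2 := by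
  rcases eq_or_ne x 0 with rfl | hx
  · simp
  · rw [deriv_sinc, mul_div_cancel₀ _ hx]
    exact abs_cos_sub_sinc_le_two x

theorem sinc_sq_le (x : ℝ) : sinc x ^ 2 ≤ 2 * (1 + x ^ 2)⁻¹ := by
  rw [← div_eq_mul_inv, le_div_iff₀ (by positivity)]
  calc sinc x ^ 2 * (1 + x ^ 2) = sinc x ^ 2 + sin x ^ 2 := by rw [← mul_sinc x]; ring
    _ ≤ 1 + 1 := add_le_add ((sq_le_one_iff_abs_le_one _).mpr (abs_sinc_le_one x)) (sin_sq_le_one x)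
    _ = 2 := by norm_num

theorem abs_sinc_mul_deriv_sinc_le (x : ℝ) : |sinc x * deriv sinc x| ≤ 3 * (1 + x ^ 2)⁻¹ := by
  rw [← div_eq_mul_inv, le_div_iff₀ (by positivity)]
  calc |sinc x * deriv sinc x| * (1 + x ^ 2)
      = |sinc x| * |deriv sinc x| + |x * sinc x| * |x * deriv sinc x| := by
        simp only [abs_mul]
        linear_combination (|sinc x| * |deriv sinc x|) * (sq_abs x).symm
    _ ≤ 1 * 1 + 1 * 2 := by
        rw [mul_sinc]
        gcongr
        exacts [abs_sinc_le_one x, abs_deriv_sinc_le_one x, abs_sin_le_one x,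
          abs_mul_deriv_sinc_le_two x]
    _ = 3 := by norm_num

theorem integrable_sinc_sq : Integrable fun x ↦ sinc x ^ 2 := by
  refine (integrable_inv_one_add_sq.const_mul 2).mono' (by fun_prop) (.of_forall fun x ↦ ?_)
  rw [norm_of_nonneg (sq_nonneg _)]
  exact sinc_sq_le x

theorem deriv_sinc_sq (x : ℝ) : deriv (fun y ↦ sinc y ^ 2) x = 2 * (sinc x * deriv sinc x) := by
  rw [deriv_fun_pow (differentiable_sinc x)]
  ring

theorem abs_deriv_sinc_sq_le (x : ℝ) : |deriv (fun y ↦ sinc y ^ 2) x| ≤ 6 * (1 + x ^ 2)⁻¹ := by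
  rw [deriv_sinc_sq, abs_mul, abs_two]
  linarith [abs_sinc_mul_deriv_sinc_le x]

theorem integrable_deriv_sinc_sq : Integrable (deriv fun x ↦ sinc x ^ 2) := by
  exact (integrable_inv_one_add_sq.const_mul 6).mono' (measurable_deriv _).aestronglyMeasurable
    (.of_forall abs_deriv_sinc_sq_le)

theorem integral_abs_deriv_sinc_sq_le : ∫ x, |deriv (fun y ↦ sinc y ^ 2) x| ≤ 6 * π :=
  calc ∫ x, |deriv (fun y ↦ sinc y ^ 2) x| ≤ ∫ x : ℝ, 6 * (1 + x ^ 2)⁻¹ :=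
        integral_mono integrable_deriv_sinc_sq.abs (integrable_inv_one_add_sq.const_mul 6)
          abs_deriv_sinc_sq_le
    _ = 6 * π := by rw [integral_const_mul, integral_univ_inv_one_add_sq]

end Sinc

section Periodization

theorem integral_mul_le_of_periodic {f g : ℝ → ℝ} {c : ℤ → ℝ} {a S : ℝ}
    (hfg : Integrable fun v ↦ f v * g v) (hper : Function.Periodic g 1)
    (hg : IntervalIntegrable g volume a (a + 1)) (hg0 : ∀ v, 0 ≤ g v)
    (hf : ∀ n : ℤ, ∀ v ∈ Icc (a + n) (a + n + 1), f v ≤ c n) (hc : HasSum c S) :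
    ∫ v, f v * g v ≤ S * ∫ v in a..a + 1, g v := by
  refine hasSum_le (fun n ↦ ?_) (hfg.hasSum_intervalIntegral a) (hc.mul_right _)
  rw [hper.intervalIntegral_add_eq a (a + n), ← intervalIntegral.integral_const_mul]
  refine intervalIntegral.integral_mono_on (by linarith) hfg.intervalIntegrable
    ((hper.intervalIntegrable one_ne_zero hg _ _).const_mul _) fun v hv ↦ ?_
  exact mul_le_mul_of_nonneg_right (hf n v hv) (hg0 v)

theorem hasSum_int_one_div_sq : HasSum (fun n : ℤ ↦ 1 / (n : ℝ) ^ 2) (π ^ 2 / 3) := by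
  have hvalue : π ^ 2 / 3 = π ^ 2 / 6 + π ^ 2 / 6 - 1 / ((0 : ℤ) : ℝ) ^ 2 := by
    simp
    ring
  rw [hvalue]
  exact .of_nat_of_neg (by simpa using hasSum_zeta_two) (by simpa using hasSum_zeta_two)

theorem int_abs_le_two_mul_abs {n : ℤ} {v : ℝ}
    (hv : v ∈ Icc (-(1 / 2) + n : ℝ) (-(1 / 2) + n + 1)) :
    |(n : ℝ)| ≤ 2 * |v| := by
  have h : |(n : ℝ) - v| ≤ 1 / 2 := abs_le.mpr ⟨by linarith [hv.2], by linarith [hv.1]⟩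
  rcases eq_or_ne n 0 with rfl | hn
  · simp
  · have hn1 : (1 : ℝ) ≤ |(n : ℝ)| := by exact_mod_cast Int.one_le_abs hn
    linarith [abs_sub_abs_le_abs_sub (n : ℝ) v]

theorem sinc_pi_mul_sq_le {n : ℤ} {v : ℝ}
    (hv : v ∈ Icc (-(1 / 2) + n : ℝ) (-(1 / 2) + n + 1)) :
    sinc (π * v) ^ 2 ≤ (if n = 0 then 1 else 0) + 4 / π ^ 2 * (1 / (n : ℝ) ^ 2) := by
  split_ifs with hn
  · simpa [hn, sq_le_one_iff_abs_le_one] using abs_sinc_le_one (π * v)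
  · have : (n : ℝ) ≠ 0 := by exact_mod_cast hn
    have hsq : (n : ℝ) ^ 2 ≤ 4 * v ^ 2 := by
      nlinarith [int_abs_le_two_mul_abs hv, sq_abs (n : ℝ), sq_abs v, abs_nonneg (n : ℝ)]
    have hsin : (π * v) ^ 2 * sinc (π * v) ^ 2 ≤ 1 := by
      rw [← mul_pow, mul_sinc]
      exact sin_sq_le_one _
    rw [zero_add, div_mul_div_comm, mul_one, le_div_iff₀ (by positivity)]
    nlinarith [mul_le_mul_of_nonneg_left hsq (sq_nonneg (π * sinc (π * v)))]

theorem integrable_sinc_pi_mul_sq_mul {g : ℝ → ℝ} (hg : Continuous g)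
    (hper : Function.Periodic g 1) : Integrable fun v ↦ sinc (π * v) ^ 2 * g v := by
  obtain ⟨M, hM⟩ := (hper.isBounded_of_continuous one_ne_zero hg).exists_norm_le
  exact (integrable_sinc_sq.comp_mul_left' pi_ne_zero).mul_bdd hg.aestronglyMeasurable
    (.of_forall fun v ↦ hM _ (mem_range_self v))

theorem integral_sinc_pi_mul_sq_mul_le {g : ℝ → ℝ} (hg : Continuous g)
    (hper : Function.Periodic g 1) (hg0 : ∀ v, 0 ≤ g v) :
    ∫ v, sinc (π * v) ^ 2 * g v ≤ 7 / 3 * ∫ v in -(1 / 2)..1 / 2, g v := by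
  have hweights : HasSum (fun n : ℤ ↦ (if n = 0 then 1 else 0) + 4 / π ^ 2 * (1 / (n : ℝ) ^ 2))
      (7 / 3) := by
    convert (hasSum_ite_eq (0 : ℤ) (1 : ℝ)).add (hasSum_int_one_div_sq.mul_left (4 / π ^ 2)) using 1
    field_simp
    norm_num
  have h := integral_mul_le_of_periodic (integrable_sinc_pi_mul_sq_mul hg hper) hper
    (hg.intervalIntegrable _ _) hg0 (fun _ _ ↦ sinc_pi_mul_sq_le) hweights
  have hright : -(1 / 2) + 1 = (1 / 2 : ℝ) := by norm_num
  rwa [hright] at h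

end Periodization

theorem integral_abs_deriv_of_even {f : ℝ → ℝ} {b : ℝ} (hb : 0 ≤ b) (hdiff : Differentiable ℝ f)
    (hcont : Continuous (deriv f)) (heven : Function.Even f)
    (hf' : ∀ x ∈ Icc 0 b, deriv f x ≤ 0) :
    ∫ x in -b..b, |deriv f x| = 2 * (f 0 - f b) := by
  have hodd (x : ℝ) : deriv f (-x) = -deriv f x := by
    rw [← neg_neg (deriv f (-x)), ← deriv_comp_neg, funext heven]
  have hright : ∫ x in 0..b, |deriv f x| = f 0 - f b := by
    rw [intervalIntegral.integral_congr (g := fun x ↦ -deriv f x) fun x hx ↦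
        abs_of_nonpos (hf' x (uIcc_of_le hb ▸ hx)), intervalIntegral.integral_neg,
      intervalIntegral.integral_deriv_eq_sub (fun x _ ↦ hdiff x) (hcont.intervalIntegrable _ _),
      neg_sub]
  have hleft : ∫ x in -b..0, |deriv f x| = ∫ x in 0..b, |deriv f x| := by
    rw [← neg_zero, ← intervalIntegral.integral_comp_neg]
    simp [hodd]
  rw [← intervalIntegral.integral_add_adjacent_intervals (hcont.abs.intervalIntegrable (-b) 0)
    (hcont.abs.intervalIntegrable 0 b), hleft, hright, two_mul]

section LatticeHeatSymbol

/-- The heat symbol `e^{-a sin²(πv)}` of the one-dimensional discrete Laplacian, as a function of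
the frequency `v` normalised to have period `1`; in terms of the time `t` and the mesh `ε`, the
parameter is `a = 4t / ε²`. -/
noncomputable def latticeHeatSymbol (a v : ℝ) : ℝ := exp (-(a * sin (π * v) ^ 2))

/-- The Fourier transform of the lattice heat kernel extended to `ℝ` by linear interpolation:
the interpolation multiplies the symbol by `sinc²(πv)`. -/
noncomputable def interpolatedHeatSymbol (a v : ℝ) : ℝ := sinc (π * v) ^ 2 * latticeHeatSymbol a v

variable {a : ℝ}

theorem latticeHeatSymbol_pos (a v : ℝ) : 0 < latticeHeatSymbol a v := exp_pos _

theorem latticeHeatSymbol_le_one (ha : 0 ≤ a) (v : ℝ) : latticeHeatSymbol a v ≤ 1 :=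
  exp_le_one_iff.mpr (neg_nonpos.mpr (by positivity))

theorem periodic_latticeHeatSymbol (a : ℝ) : Function.Periodic (latticeHeatSymbol a) 1 := fun v ↦ by
  simp [latticeHeatSymbol, mul_add, sin_add_pi]

theorem hasDerivAt_latticeHeatSymbol (a v : ℝ) :
    HasDerivAt (latticeHeatSymbol a) (-(a * π * sin (2 * (π * v)) * latticeHeatSymbol a v)) v := by
  have hsin : HasDerivAt (fun w ↦ sin (π * w)) (cos (π * v) * π) v := by
    simpa using ((hasDerivAt_id v).const_mul π).sin
  refine (((hsin.fun_pow 2).const_mul a).fun_neg.exp).congr_deriv ?_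
  rw [latticeHeatSymbol, sin_two_mul]
  ring

theorem deriv_latticeHeatSymbol (a : ℝ) : deriv (latticeHeatSymbol a) =
    fun v ↦ -(a * π * sin (2 * (π * v)) * latticeHeatSymbol a v) :=
  funext fun v ↦ (hasDerivAt_latticeHeatSymbol a v).deriv

theorem differentiable_latticeHeatSymbol (a : ℝ) : Differentiable ℝ (latticeHeatSymbol a) :=
  fun v ↦ (hasDerivAt_latticeHeatSymbol a v).differentiableAt

theorem continuous_latticeHeatSymbol (a : ℝ) : Continuous (latticeHeatSymbol a) :=
  (differentiable_latticeHeatSymbol a).continuous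

theorem continuous_deriv_latticeHeatSymbol (a : ℝ) : Continuous (deriv (latticeHeatSymbol a)) := by
  have := continuous_latticeHeatSymbol a
  rw [deriv_latticeHeatSymbol]
  fun_prop

theorem periodic_deriv_latticeHeatSymbol (a : ℝ) :
    Function.Periodic (deriv (latticeHeatSymbol a)) 1 := fun v ↦ by
  rw [← deriv_comp_add_const, funext (periodic_latticeHeatSymbol a)]

theorem deriv_latticeHeatSymbol_nonpos (ha : 0 ≤ a) {v : ℝ} (hv : v ∈ Icc 0 (1 / 2)) :
    deriv (latticeHeatSymbol a) v ≤ 0 := by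
  have hsin : 0 ≤ sin (2 * (π * v)) :=
    sin_nonneg_of_nonneg_of_le_pi (by have := hv.1; positivity) (by nlinarith [hv.2, pi_pos])
  have := latticeHeatSymbol_pos a v
  rw [deriv_latticeHeatSymbol, neg_nonpos]
  positivity

theorem integral_abs_deriv_latticeHeatSymbol_le (ha : 0 ≤ a) :
    ∫ v in -(1 / 2)..1 / 2, |deriv (latticeHeatSymbol a) v| ≤ 2 := by
  rw [integral_abs_deriv_of_even (by norm_num) (differentiable_latticeHeatSymbol a)
    (continuous_deriv_latticeHeatSymbol a) (fun v ↦ by simp [latticeHeatSymbol])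
    fun v hv ↦ deriv_latticeHeatSymbol_nonpos ha hv]
  linarith [latticeHeatSymbol_le_one ha 0, latticeHeatSymbol_pos a (1 / 2)]

theorem integral_latticeHeatSymbol_le_one (ha : 0 ≤ a) :
    ∫ v in -(1 / 2)..1 / 2, latticeHeatSymbol a v ≤ 1 :=
  calc ∫ v in -(1 / 2)..1 / 2, latticeHeatSymbol a v ≤ ∫ _ in -(1 / 2 : ℝ)..1 / 2, (1 : ℝ) :=
        intervalIntegral.integral_mono_on (by norm_num)
          ((continuous_latticeHeatSymbol a).intervalIntegrable _ _) intervalIntegrable_const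
          fun v _ ↦ latticeHeatSymbol_le_one ha v
    _ = 1 := by norm_num

theorem latticeHeatSymbol_le_gaussian (ha : 0 ≤ a) {v : ℝ} (hv : |v| ≤ 1 / 2) :
    latticeHeatSymbol a v ≤ exp (-(4 * a) * v ^ 2) := by
  have hsin : 2 * |v| ≤ |sin (π * v)| := by
    have hπv : |π * v| = π * |v| := by rw [abs_mul, abs_of_pos pi_pos]
    calc 2 * |v| = 2 / π * |π * v| := by rw [hπv]; field_simp
      _ ≤ |sin (π * v)| := mul_abs_le_abs_sin (by rw [hπv]; nlinarith [pi_pos])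
  have hsq : 4 * v ^ 2 ≤ sin (π * v) ^ 2 := by
    nlinarith [sq_abs v, sq_abs (sin (π * v)), abs_nonneg v]
  exact exp_le_exp.mpr (by nlinarith)

theorem integral_latticeHeatSymbol_le_sqrt (ha : 0 < a) :
    ∫ v in -(1 / 2)..1 / 2, latticeHeatSymbol a v ≤ √(π / (4 * a)) := by
  have hgauss : Integrable fun v : ℝ ↦ exp (-(4 * a) * v ^ 2) :=
    integrable_exp_neg_mul_sq (by positivity)
  calc ∫ v in -(1 / 2)..1 / 2, latticeHeatSymbol a v
      ≤ ∫ v in -(1 / 2)..1 / 2, exp (-(4 * a) * v ^ 2) :=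
        intervalIntegral.integral_mono_on (by norm_num)
          ((continuous_latticeHeatSymbol a).intervalIntegrable _ _) hgauss.intervalIntegrable
          fun v hv ↦ latticeHeatSymbol_le_gaussian ha.le (abs_le.mpr hv)
    _ ≤ ∫ v, exp (-(4 * a) * v ^ 2) := by
        rw [intervalIntegral.integral_of_le (by norm_num)]
        exact setIntegral_le_integral hgauss (.of_forall fun v ↦ (exp_pos _).le)
    _ = √(π / (4 * a)) := integral_gaussian _

theorem interpolatedHeatSymbol_nonneg (a v : ℝ) : 0 ≤ interpolatedHeatSymbol a v :=
  mul_nonneg (sq_nonneg _) (latticeHeatSymbol_pos a v).le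

theorem integrable_interpolatedHeatSymbol (a : ℝ) : Integrable (interpolatedHeatSymbol a) :=
  integrable_sinc_pi_mul_sq_mul (continuous_latticeHeatSymbol a) (periodic_latticeHeatSymbol a)

theorem integral_interpolatedHeatSymbol_le_integral (a : ℝ) :
    ∫ v, interpolatedHeatSymbol a v ≤ 7 / 3 * ∫ v in -(1 / 2)..1 / 2, latticeHeatSymbol a v :=
  integral_sinc_pi_mul_sq_mul_le (continuous_latticeHeatSymbol a) (periodic_latticeHeatSymbol a)
    fun v ↦ (latticeHeatSymbol_pos a v).le

theorem integral_interpolatedHeatSymbol_le (ha : 0 ≤ a) :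
    ∫ v, interpolatedHeatSymbol a v ≤ 7 / 3 := by
  linarith [integral_interpolatedHeatSymbol_le_integral a, integral_latticeHeatSymbol_le_one ha]

theorem differentiable_sinc_pi_mul_sq : Differentiable ℝ fun v ↦ sinc (π * v) ^ 2 :=
  (differentiable_sinc.comp (differentiable_id.const_mul π)).pow 2

theorem deriv_sinc_pi_mul_sq (v : ℝ) :
    deriv (fun v ↦ sinc (π * v) ^ 2) v = π * deriv (fun x ↦ sinc x ^ 2) (π * v) :=
  deriv_comp_mul_left π (fun x ↦ sinc x ^ 2) v

theorem integrable_deriv_sinc_pi_mul_sq : Integrable (deriv fun v ↦ sinc (π * v) ^ 2) := by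
  rw [funext deriv_sinc_pi_mul_sq]
  exact (integrable_deriv_sinc_sq.comp_mul_left' pi_ne_zero).const_mul π

theorem integral_abs_deriv_sinc_pi_mul_sq_le :
    ∫ v, |deriv (fun v ↦ sinc (π * v) ^ 2) v| ≤ 6 * π := by
  simp only [deriv_sinc_pi_mul_sq, abs_mul, abs_of_pos pi_pos]
  rw [integral_const_mul,
    Measure.integral_comp_mul_left (fun x ↦ |deriv (fun x ↦ sinc x ^ 2) x|) π,
    abs_of_pos (inv_pos.mpr pi_pos), smul_eq_mul, mul_inv_cancel_left₀ pi_ne_zero]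
  exact integral_abs_deriv_sinc_sq_le

theorem differentiable_interpolatedHeatSymbol (a : ℝ) :
    Differentiable ℝ (interpolatedHeatSymbol a) :=
  differentiable_sinc_pi_mul_sq.mul (differentiable_latticeHeatSymbol a)

theorem deriv_interpolatedHeatSymbol (a : ℝ) : deriv (interpolatedHeatSymbol a) = fun v ↦
    deriv (fun v ↦ sinc (π * v) ^ 2) v * latticeHeatSymbol a v +
      sinc (π * v) ^ 2 * deriv (latticeHeatSymbol a) v :=
  funext fun v ↦ deriv_mul (differentiable_sinc_pi_mul_sq v) (differentiable_latticeHeatSymbol a v)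

theorem integrable_deriv_interpolatedHeatSymbol (ha : 0 ≤ a) :
    Integrable (deriv (interpolatedHeatSymbol a)) := by
  rw [deriv_interpolatedHeatSymbol]
  refine .add (integrable_deriv_sinc_pi_mul_sq.mul_bdd (c := 1)
    (continuous_latticeHeatSymbol a).aestronglyMeasurable (.of_forall fun v ↦ ?_))
    (integrable_sinc_pi_mul_sq_mul (continuous_deriv_latticeHeatSymbol a)
      (periodic_deriv_latticeHeatSymbol a))
  rw [norm_of_nonneg (latticeHeatSymbol_pos a v).le]
  exact latticeHeatSymbol_le_one ha v

theorem abs_deriv_interpolatedHeatSymbol_le (ha : 0 ≤ a) (v : ℝ) :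
    |deriv (interpolatedHeatSymbol a) v| ≤ |deriv (fun v ↦ sinc (π * v) ^ 2) v| +
      sinc (π * v) ^ 2 * |deriv (latticeHeatSymbol a) v| := by
  rw [deriv_interpolatedHeatSymbol]
  refine (abs_add_le _ _).trans ?_
  rw [abs_mul, abs_mul, abs_of_pos (latticeHeatSymbol_pos a v), abs_sq]
  gcongr
  exact mul_le_of_le_one_right (abs_nonneg _) (latticeHeatSymbol_le_one ha v)

theorem integral_abs_deriv_interpolatedHeatSymbol_le (ha : 0 ≤ a) :
    ∫ v, |deriv (interpolatedHeatSymbol a) v| ≤ 6 * π + 14 / 3 := by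
  have hcont := (continuous_deriv_latticeHeatSymbol a).abs
  have hper : Function.Periodic (fun v ↦ |deriv (latticeHeatSymbol a) v|) 1 :=
    (periodic_deriv_latticeHeatSymbol a).comp abs
  have hint := integrable_sinc_pi_mul_sq_mul hcont hper
  calc ∫ v, |deriv (interpolatedHeatSymbol a) v|
      ≤ ∫ v, |deriv (fun v ↦ sinc (π * v) ^ 2) v| +
          sinc (π * v) ^ 2 * |deriv (latticeHeatSymbol a) v| :=
        integral_mono (integrable_deriv_interpolatedHeatSymbol ha).abs
          (integrable_deriv_sinc_pi_mul_sq.abs.add hint) (abs_deriv_interpolatedHeatSymbol_le ha)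
    _ = (∫ v, |deriv (fun v ↦ sinc (π * v) ^ 2) v|) +
          ∫ v, sinc (π * v) ^ 2 * |deriv (latticeHeatSymbol a) v| :=
        integral_add integrable_deriv_sinc_pi_mul_sq.abs hint
    _ ≤ 6 * π + 7 / 3 * 2 := by
        refine add_le_add integral_abs_deriv_sinc_pi_mul_sq_le
          ((integral_sinc_pi_mul_sq_mul_le hcont hper fun v ↦ abs_nonneg _).trans ?_)
        gcongr
        exact integral_abs_deriv_latticeHeatSymbol_le ha
    _ = 6 * π + 14 / 3 := by ring

end LatticeHeatSymbol

section HeatKernels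

/-- The one-dimensional heat kernel at time `t`. -/
noncomputable def heatKernel (t x : ℝ) : ℝ := (√(4 * π * t))⁻¹ * exp (-(x ^ 2 / (4 * t)))

/-- One quarter of the heat kernel at time `t` of the discrete Laplacian on `εℤ`, interpolated
linearly to `ℝ`. The quarter matches the factors `sin²(εk/2) / (εk)² = sinc²(εk/2) / 4` of
`GbarEps`. -/
noncomputable def latticeHeatKernel (ε t z : ℝ) : ℂ :=
  ((4 * ε)⁻¹ : ℝ) * 𝓕 (fun v ↦ (interpolatedHeatSymbol (4 * t / ε ^ 2) v : ℂ)) (z / ε)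

variable {ε t : ℝ}

theorem heatKernel_nonneg (t x : ℝ) : 0 ≤ heatKernel t x := by
  unfold heatKernel
  positivity

theorem heatKernel_le (ht : 0 < t) (x : ℝ) : heatKernel t x ≤ (√(4 * π * t))⁻¹ :=
  mul_le_of_le_one_right (by positivity) (exp_le_one_iff.mpr (neg_nonpos.mpr (by positivity)))

theorem abs_mul_heatKernel_le_one (ht : 0 < t) (x : ℝ) : |x| * heatKernel t x ≤ 1 := by
  set s := x ^ 2 / (4 * t) with hs
  have hsq : |x| ^ 2 ≤ (√(4 * π * t) * exp s) ^ 2 :=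
    calc |x| ^ 2 = 4 * t * s := by rw [sq_abs, hs]; field_simp
      _ ≤ 4 * t * exp s ^ 2 := by
        gcongr
        nlinarith [add_one_le_exp s, show 0 ≤ s by positivity]
      _ ≤ (√(4 * π * t) * exp s) ^ 2 := by
        rw [mul_pow, sq_sqrt (by positivity)]
        gcongr
        nlinarith [pi_gt_three]
  rw [heatKernel, exp_neg, ← mul_inv, ← div_eq_mul_inv]
  exact div_le_one_of_le₀ (le_of_sq_le_sq hsq (by positivity)) (by positivity)

theorem norm_latticeHeatKernel (hε : 0 < ε) (t z : ℝ) : ‖latticeHeatKernel ε t z‖ =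
    (4 * ε)⁻¹ * ‖𝓕 (fun v ↦ (interpolatedHeatSymbol (4 * t / ε ^ 2) v : ℂ)) (z / ε)‖ := by
  rw [latticeHeatKernel, norm_mul, Complex.norm_of_nonneg (by positivity)]

theorem norm_latticeHeatKernel_le_integral (hε : 0 < ε) (t z : ℝ) : ‖latticeHeatKernel ε t z‖ ≤
    (4 * ε)⁻¹ * ∫ v, interpolatedHeatSymbol (4 * t / ε ^ 2) v := by
  rw [norm_latticeHeatKernel hε]
  gcongr
  refine (norm_fourier_le_integral_norm _ _).trans_eq (integral_congr_ae (.of_forall fun v ↦ ?_))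
  exact Complex.norm_of_nonneg (interpolatedHeatSymbol_nonneg _ v)

theorem norm_latticeHeatKernel_le (hε : 0 < ε) (ht : 0 < t) (z : ℝ) :
    ‖latticeHeatKernel ε t z‖ ≤ (√(4 * π * t))⁻¹ := by
  have hsqrt : √(π / (4 * (4 * t / ε ^ 2))) = ε * π / (2 * √(4 * π * t)) := by
    rw [← sqrt_sq (show 0 ≤ ε * π / (2 * √(4 * π * t)) by positivity), div_pow, mul_pow, mul_pow,
      sq_sqrt (by positivity)]
    congr 1
    field_simp
    norm_num
  calc ‖latticeHeatKernel ε t z‖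
      ≤ (4 * ε)⁻¹ * (7 / 3 * (ε * π / (2 * √(4 * π * t)))) := by
        refine (norm_latticeHeatKernel_le_integral hε t z).trans ?_
        rw [← hsqrt]
        gcongr
        exact (integral_interpolatedHeatSymbol_le_integral _).trans
          (by gcongr; exact integral_latticeHeatSymbol_le_sqrt (by positivity))
    _ = 7 * π / 24 * (√(4 * π * t))⁻¹ := by field_simp; norm_num
    _ ≤ (√(4 * π * t))⁻¹ := mul_le_of_le_one_left (by positivity) (by linarith [pi_lt_d2])

theorem mul_norm_latticeHeatKernel_le_one (hε : 0 < ε) (ht : 0 ≤ t) (z : ℝ) :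
    ε * ‖latticeHeatKernel ε t z‖ ≤ 1 :=
  calc ε * ‖latticeHeatKernel ε t z‖ ≤ ε * ((4 * ε)⁻¹ * (7 / 3)) := by
        gcongr
        refine (norm_latticeHeatKernel_le_integral hε t z).trans ?_
        gcongr
        exact integral_interpolatedHeatSymbol_le (by positivity)
    _ = 7 / 12 := by field_simp; norm_num
    _ ≤ 1 := by norm_num

theorem abs_mul_norm_latticeHeatKernel_le_one (hε : 0 < ε) (ht : 0 ≤ t) (z : ℝ) :
    |z| * ‖latticeHeatKernel ε t z‖ ≤ 1 := by
  set a := 4 * t / ε ^ 2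
  have ha : 0 ≤ a := by positivity
  have hderiv : deriv (fun v ↦ (interpolatedHeatSymbol a v : ℂ)) =
      fun v ↦ ((deriv (interpolatedHeatSymbol a) v : ℝ) : ℂ) :=
    funext fun v ↦ (differentiable_interpolatedHeatSymbol a v).hasDerivAt.ofReal_comp.deriv
  have hdecay := abs_mul_norm_fourier_le (integrable_interpolatedHeatSymbol a).ofReal
    (fun v ↦ (differentiable_interpolatedHeatSymbol a v).hasDerivAt.ofReal_comp.differentiableAt)
    (hderiv ▸ (integrable_deriv_interpolatedHeatSymbol ha).ofReal) (z / ε)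
  simp only [hderiv, Complex.norm_real, norm_eq_abs] at hdecay
  calc |z| * ‖latticeHeatKernel ε t z‖
      = 4⁻¹ * (|z / ε| * ‖𝓕 (fun v ↦ (interpolatedHeatSymbol a v : ℂ)) (z / ε)‖) := by
        rw [norm_latticeHeatKernel hε, abs_div, abs_of_pos hε, mul_inv]
        ring
    _ ≤ 4⁻¹ * ((2 * π)⁻¹ * (6 * π + 14 / 3)) := by
        refine mul_le_mul_of_nonneg_left (hdecay.trans ?_) (by norm_num)
        gcongr
        exact integral_abs_deriv_interpolatedHeatSymbol_le ha
    _ = 3 / 4 + 7 / (12 * π) := by field_simp; ring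
    _ ≤ 3 / 4 + 7 / (12 * 3) := by gcongr; exact pi_gt_three.le
    _ ≤ 1 := by norm_num

end HeatKernels

section HeatWaves

/-- The integrand in the Fourier representation of `heatKernel t x`. -/
noncomputable def heatWave (t x y : ℝ) : ℂ :=
  (exp (-t * y ^ 2) : ℝ) * Complex.exp (-Complex.I * (x * y))

/-- The integrand in the Fourier representation of `latticeHeatKernel ε t z`. At `k = 0` the
division makes it `0`, so it agrees with the continuous symbol only almost everywhere. -/
noncomputable def latticeHeatWave (ε t z k : ℝ) : ℂ :=
  (sin (ε * k / 2) ^ 2 / (ε * k) ^ 2 * exp (-(4 * t / ε ^ 2 * sin (ε * k / 2) ^ 2)) : ℝ) *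
    Complex.exp (-Complex.I * (z * k))

variable {ε t : ℝ}

theorem norm_cexp_neg_I_mul (x y : ℝ) : ‖Complex.exp (-Complex.I * (x * y))‖ = 1 := by
  simp [Complex.norm_exp]

theorem norm_heatWave (t x y : ℝ) : ‖heatWave t x y‖ = exp (-t * y ^ 2) := by
  rw [heatWave, norm_mul, norm_cexp_neg_I_mul, mul_one, Complex.norm_of_nonneg (exp_pos _).le]

theorem integrable_heatWave (ht : 0 < t) (x : ℝ) : Integrable (heatWave t x) := by
  rw [← integrable_norm_iff (by unfold heatWave; fun_prop)]
  simpa only [norm_heatWave] using integrable_exp_neg_mul_sq ht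

theorem integral_norm_heatWave (t x : ℝ) : ∫ y, ‖heatWave t x y‖ = √(π / t) := by
  simpa only [norm_heatWave] using integral_gaussian t

theorem integral_heatWave (ht : 0 < t) (x : ℝ) :
    ∫ y, heatWave t x y = 2 * π * heatKernel t x := by
  have hsqrt : √(π / t) = 2 * π * (√(4 * π * t))⁻¹ := by
    rw [← sqrt_sq (show 0 ≤ 2 * π * (√(4 * π * t))⁻¹ by positivity), mul_pow, mul_pow, inv_pow,
      sq_sqrt (by positivity)]
    congr 1
    field_simp
    norm_num
  have hcpow : ((π : ℂ) / t) ^ (1 / 2 : ℂ) = (√(π / t) : ℝ) := by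
    rw [sqrt_eq_rpow, Complex.ofReal_cpow (by positivity)]
    norm_num
  have hgauss := fourierIntegral_gaussian (b := (t : ℂ)) (by simpa using ht) (-x)
  rw [hcpow, hsqrt] at hgauss
  calc ∫ y, heatWave t x y
      = ∫ y : ℝ, Complex.exp (Complex.I * -x * y) * Complex.exp (-t * y ^ 2) := by
        refine integral_congr_ae (.of_forall fun y ↦ ?_)
        simp only [heatWave, Complex.ofReal_exp]
        push_cast
        ring_nf
    _ = 2 * π * heatKernel t x := by
        rw [hgauss, heatKernel]
        push_cast
        ring_nf

theorem latticeHeatWave_eq {k : ℝ} (hε : 0 < ε) (hk : k ≠ 0) (t z : ℝ) :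
    latticeHeatWave ε t z k =
      4⁻¹ * (interpolatedHeatSymbol (4 * t / ε ^ 2) (ε / (2 * π) * k) : ℂ) *
        Complex.exp (-Complex.I * (z * k)) := by
  have hfreq : π * (ε / (2 * π) * k) = ε * k / 2 := by field_simp
  rw [latticeHeatWave, interpolatedHeatSymbol, latticeHeatSymbol, hfreq,
    sinc_of_ne_zero (by positivity), div_pow, div_pow]
  push_cast
  ring

theorem latticeHeatWave_ae_eq (hε : 0 < ε) (t z : ℝ) : latticeHeatWave ε t z =ᵐ[volume]
    fun k ↦ 4⁻¹ * (interpolatedHeatSymbol (4 * t / ε ^ 2) (ε / (2 * π) * k) : ℂ) *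
      Complex.exp (-Complex.I * (z * k)) := by
  filter_upwards [compl_mem_ae_iff.mpr (measure_singleton (0 : ℝ))] with k hk
  exact latticeHeatWave_eq hε hk t z

theorem norm_latticeHeatWave_ae_eq (hε : 0 < ε) (t z : ℝ) :
    (fun k ↦ ‖latticeHeatWave ε t z k‖) =ᵐ[volume]
      fun k ↦ 4⁻¹ * interpolatedHeatSymbol (4 * t / ε ^ 2) (ε / (2 * π) * k) := by
  filter_upwards [latticeHeatWave_ae_eq hε t z] with k hk
  rw [hk, norm_mul, norm_cexp_neg_I_mul, mul_one, norm_mul,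
    Complex.norm_of_nonneg (interpolatedHeatSymbol_nonneg _ _)]
  norm_num

theorem integrable_latticeHeatWave (hε : 0 < ε) (t z : ℝ) :
    Integrable (latticeHeatWave ε t z) := by
  have hmeas : Measurable (latticeHeatWave ε t z) := by unfold latticeHeatWave; fun_prop
  rw [← integrable_norm_iff hmeas.aestronglyMeasurable,
    integrable_congr (norm_latticeHeatWave_ae_eq hε t z)]
  exact ((integrable_interpolatedHeatSymbol _).comp_mul_left' (by positivity)).const_mul _

theorem integral_norm_latticeHeatWave_le (hε : 0 < ε) (ht : 0 ≤ t) (z : ℝ) :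
    ∫ k, ‖latticeHeatWave ε t z k‖ ≤ 4 / ε :=
  calc ∫ k, ‖latticeHeatWave ε t z k‖
      = 4⁻¹ * (2 * π / ε * ∫ v, interpolatedHeatSymbol (4 * t / ε ^ 2) v) := by
        rw [integral_congr_ae (norm_latticeHeatWave_ae_eq hε t z), integral_const_mul,
          Measure.integral_comp_mul_left, inv_div, abs_of_pos (by positivity), smul_eq_mul]
    _ ≤ 4⁻¹ * (2 * 3.15 / ε * (7 / 3)) := by
        gcongr
        · exact integral_nonneg (interpolatedHeatSymbol_nonneg _)
        · exact pi_lt_d2.le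
        · exact integral_interpolatedHeatSymbol_le (by positivity)
    _ ≤ 4 / ε := by
        rw [← sub_nonneg]
        ring_nf
        positivity

theorem integral_latticeHeatWave (hε : 0 < ε) (t z : ℝ) :
    ∫ k, latticeHeatWave ε t z k = 2 * π * latticeHeatKernel ε t z := by
  rw [integral_congr_ae (latticeHeatWave_ae_eq hε t z)]
  simp only [mul_assoc (4⁻¹ : ℂ)]
  rw [integral_const_mul,
    integral_comp_mul_mul_cexp hε (fun v ↦ (interpolatedHeatSymbol (4 * t / ε ^ 2) v : ℂ)),
    latticeHeatKernel]
  push_cast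
  ring

end HeatWaves

section ProperTime

theorem integral_mul_exp_neg_mul_Ioi {a : ℝ} (ha : 0 < a) :
    ∫ t in Ioi (0 : ℝ), t * exp (-(a * t)) = (a ^ 2)⁻¹ := by
  have h := Real.integral_rpow_mul_exp_neg_mul_Ioi two_pos ha
  norm_num [Real.Gamma_two] at h
  exact h

theorem integrableOn_exp_neg_mul_Ioi {a : ℝ} (ha : 0 < a) :
    IntegrableOn (fun t ↦ exp (-(a * t))) (Ioi 0) := by
  simpa only [neg_mul] using integrableOn_exp_mul_Ioi (neg_lt_zero.mpr ha) 0

theorem integral_mul_mul_mul_prod {𝕜 α β γ δ : Type*} [RCLike 𝕜] [MeasureSpace α] [MeasureSpace β]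
    [MeasureSpace γ] [MeasureSpace δ] [SFinite (volume : Measure α)] [SFinite (volume : Measure β)]
    [SFinite (volume : Measure γ)] [SFinite (volume : Measure δ)]
    (f₁ : α → 𝕜) (f₂ : β → 𝕜) (g₁ : γ → 𝕜) (g₂ : δ → 𝕜) :
    ∫ w : (α × β) × γ × δ, f₁ w.1.1 * f₂ w.1.2 * (g₁ w.2.1 * g₂ w.2.2) =
      (∫ y, f₁ y) * (∫ y, f₂ y) * ((∫ k, g₁ k) * ∫ k, g₂ k) := by
  simp_rw [Measure.volume_eq_prod]
  rw [integral_prod_mul (fun y : α × β ↦ f₁ y.1 * f₂ y.2) fun k : γ × δ ↦ g₁ k.1 * g₂ k.2,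
    integral_prod_mul, integral_prod_mul]

theorem integrable_uncurry_of_integral_norm_le {α β E : Type*} [MeasurableSpace α]
    [MeasurableSpace β] {μ : Measure α} {ν : Measure β} [SFinite ν]
    [NormedAddCommGroup E] {f : α → β → E} {bound : α → ℝ}
    (hmeas : AEStronglyMeasurable (Function.uncurry f) (μ.prod ν))
    (hf : ∀ᵐ a ∂μ, Integrable (f a) ν) (hbound : Integrable bound μ)
    (hle : ∀ᵐ a ∂μ, ∫ b, ‖f a b‖ ∂ν ≤ bound a) :
    Integrable (Function.uncurry f) (μ.prod ν) := by
  refine (integrable_prod_iff hmeas).mpr ⟨hf, hbound.mono' hmeas.norm.integral_prod_right' ?_⟩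
  filter_upwards [hle] with a ha
  rwa [norm_of_nonneg (integral_nonneg fun _ ↦ norm_nonneg _)]

/-- The integrand of `GbarEps` in the frequencies `w = (y, k)`, opened up by the proper-time
identity `A⁻² = ∫₀^∞ t e^{-At} dt`. It factorises over the four coordinates. -/
noncomputable def properTimeIntegrand (m ε : ℝ) (x z : ℝ × ℝ) (t : ℝ) (w : (ℝ × ℝ) × ℝ × ℝ) : ℂ :=
  (t * exp (-(m ^ 2 * t)) : ℝ) *
    (heatWave t x.1 w.1.1 * heatWave t x.2 w.1.2 *
      (latticeHeatWave ε t z.1 w.2.1 * latticeHeatWave ε t z.2 w.2.2))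

/-- The density in proper time of `GbarEps`. -/
noncomputable def properTimeDensity (m ε : ℝ) (x z : ℝ × ℝ) (t : ℝ) : ℂ :=
  (t * exp (-(m ^ 2 * t)) : ℝ) *
    (heatKernel t x.1 * heatKernel t x.2 * (latticeHeatKernel ε t z.1 * latticeHeatKernel ε t z.2))

variable {m ε t : ℝ}

theorem integral_properTimeIntegrand (hε : 0 < ε) (ht : 0 < t) (x z : ℝ × ℝ) :
    ∫ w, properTimeIntegrand m ε x z t w = (2 * π) ^ 4 * properTimeDensity m ε x z t := by
  simp only [properTimeIntegrand]
  rw [integral_const_mul, integral_mul_mul_mul_prod, integral_heatWave ht, integral_heatWave ht,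
    integral_latticeHeatWave hε, integral_latticeHeatWave hε, properTimeDensity]
  ring

theorem integrable_properTimeIntegrand (m : ℝ) (hε : 0 < ε) (ht : 0 < t) (x z : ℝ × ℝ) :
    Integrable (properTimeIntegrand m ε x z t) :=
  (((integrable_heatWave ht x.1).mul_prod (integrable_heatWave ht x.2)).mul_prod
    ((integrable_latticeHeatWave hε t z.1).mul_prod
      (integrable_latticeHeatWave hε t z.2))).const_mul _

theorem integral_norm_properTimeIntegrand_le (m : ℝ) (hε : 0 < ε) (ht : 0 < t) (x z : ℝ × ℝ) :
    ∫ w, ‖properTimeIntegrand m ε x z t w‖ ≤ π * (4 / ε) ^ 2 * exp (-(m ^ 2 * t)) :=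
  calc ∫ w, ‖properTimeIntegrand m ε x z t w‖
      = t * exp (-(m ^ 2 * t)) * (√(π / t) * √(π / t) *
          ((∫ k, ‖latticeHeatWave ε t z.1 k‖) * ∫ k, ‖latticeHeatWave ε t z.2 k‖)) := by
        simp only [properTimeIntegrand, norm_mul]
        rw [integral_const_mul, Complex.norm_of_nonneg (by positivity), integral_mul_mul_mul_prod
            (fun y ↦ ‖heatWave t x.1 y‖) (fun y ↦ ‖heatWave t x.2 y‖)
            (fun k ↦ ‖latticeHeatWave ε t z.1 k‖) fun k ↦ ‖latticeHeatWave ε t z.2 k‖,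
          integral_norm_heatWave, integral_norm_heatWave]
    _ ≤ t * exp (-(m ^ 2 * t)) * (√(π / t) * √(π / t) * (4 / ε * (4 / ε))) := by
        gcongr <;> exact integral_norm_latticeHeatWave_le hε ht.le _
    _ = π * (4 / ε) ^ 2 * exp (-(m ^ 2 * t)) := by
        rw [mul_self_sqrt (by positivity)]
        field_simp

theorem integrable_uncurry_properTimeIntegrand (hm : 0 < m) (hε : 0 < ε) (x z : ℝ × ℝ) :
    Integrable (Function.uncurry (properTimeIntegrand m ε x z))
      ((volume.restrict (Ioi 0)).prod volume) := by
  have hmeas : Measurable (Function.uncurry (properTimeIntegrand m ε x z)) := by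
    unfold properTimeIntegrand heatWave latticeHeatWave Function.uncurry
    fun_prop
  refine integrable_uncurry_of_integral_norm_le hmeas.aestronglyMeasurable ?_
    ((integrableOn_exp_neg_mul_Ioi (pow_pos hm 2)).const_mul (π * (4 / ε) ^ 2)) ?_
  · filter_upwards [self_mem_ae_restrict measurableSet_Ioi] with t ht
    exact integrable_properTimeIntegrand m hε ht x z
  · filter_upwards [self_mem_ae_restrict measurableSet_Ioi] with t ht
    exact integral_norm_properTimeIntegrand_le m hε ht x z

theorem properTimeIntegrand_eq (m ε t : ℝ) (x z y k : ℝ × ℝ) :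
    properTimeIntegrand m ε x z t (y, k) =
      ((sin (ε * k.1 / 2) ^ 2 * sin (ε * k.2 / 2) ^ 2 / (ε ^ 4 * k.1 ^ 2 * k.2 ^ 2) : ℝ) : ℂ) *
        Complex.exp (-Complex.I * ((x.1 * y.1 + x.2 * y.2) + (z.1 * k.1 + z.2 * k.2))) *
        ((t * exp (-(((y.1 ^ 2 + y.2 ^ 2) + sigmaEps ε k + m ^ 2) * t)) : ℝ) : ℂ) := by
  have hexp : exp (-(((y.1 ^ 2 + y.2 ^ 2) + sigmaEps ε k + m ^ 2) * t)) =
      exp (-(m ^ 2 * t)) * exp (-t * y.1 ^ 2) * exp (-t * y.2 ^ 2) *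
        exp (-(4 * t / ε ^ 2 * sin (ε * k.1 / 2) ^ 2)) *
        exp (-(4 * t / ε ^ 2 * sin (ε * k.2 / 2) ^ 2)) := by
    simp only [← exp_add, sigmaEps]
    ring_nf
  have hphase : Complex.exp (-Complex.I * ((x.1 * y.1 + x.2 * y.2) + (z.1 * k.1 + z.2 * k.2))) =
      Complex.exp (-Complex.I * (x.1 * y.1)) * Complex.exp (-Complex.I * (x.2 * y.2)) *
        Complex.exp (-Complex.I * (z.1 * k.1)) * Complex.exp (-Complex.I * (z.2 * k.2)) := by
    simp only [← Complex.exp_add]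
    ring_nf
  have hratio : sin (ε * k.1 / 2) ^ 2 * sin (ε * k.2 / 2) ^ 2 / (ε ^ 4 * k.1 ^ 2 * k.2 ^ 2) =
      sin (ε * k.1 / 2) ^ 2 / (ε * k.1) ^ 2 * (sin (ε * k.2 / 2) ^ 2 / (ε * k.2) ^ 2) := by
    ring
  rw [hexp, hphase, hratio]
  simp only [properTimeIntegrand, heatWave, latticeHeatWave, Complex.ofReal_mul]
  ring

theorem integral_properTimeIntegrand_Ioi (hm : 0 < m) (x z y k : ℝ × ℝ) :
    ∫ t in Ioi 0, properTimeIntegrand m ε x z t (y, k) =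
      ((sin (ε * k.1 / 2) ^ 2 * sin (ε * k.2 / 2) ^ 2 / (ε ^ 4 * k.1 ^ 2 * k.2 ^ 2) : ℝ) : ℂ) *
        Complex.exp (-Complex.I * ((x.1 * y.1 + x.2 * y.2) + (z.1 * k.1 + z.2 * k.2))) /
        ((((y.1 ^ 2 + y.2 ^ 2) + sigmaEps ε k + m ^ 2) ^ 2 : ℝ) : ℂ) := by
  have hA : 0 < (y.1 ^ 2 + y.2 ^ 2) + sigmaEps ε k + m ^ 2 := by
    unfold sigmaEps
    positivity
  simp only [properTimeIntegrand_eq]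
  rw [integral_const_mul, integral_complex_ofReal, integral_mul_exp_neg_mul_Ioi hA,
    Complex.ofReal_inv, ← div_eq_mul_inv]

theorem GbarEps_eq_integral_properTimeDensity (hm : 0 < m) (hε : 0 < ε) (x z : ℝ × ℝ) :
    GbarEps m ε x z = ∫ t in Ioi 0, properTimeDensity m ε x z t := by
  have hint := integrable_uncurry_properTimeIntegrand hm hε x z
  have hpi : (π : ℂ) ≠ 0 := by exact_mod_cast pi_ne_zero
  calc GbarEps m ε x z
      = (1 / (2 * π) ^ 4 : ℝ) *
          ∫ w : (ℝ × ℝ) × ℝ × ℝ, ∫ t in Ioi 0, properTimeIntegrand m ε x z t w := by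
        simp only [GbarEps, ← integral_properTimeIntegrand_Ioi hm]
        exact congrArg _ (integral_prod _ hint.integral_prod_right).symm
    _ = (1 / (2 * π) ^ 4 : ℝ) * ∫ t in Ioi 0, ∫ w, properTimeIntegrand m ε x z t w := by
        rw [integral_integral_swap hint]
    _ = ∫ t in Ioi 0, properTimeDensity m ε x z t := by
        rw [setIntegral_congr_fun measurableSet_Ioi fun t ht ↦
          integral_properTimeIntegrand hε ht x z, integral_const_mul]
        push_cast
        field_simp

theorem integrableOn_properTimeDensity (hm : 0 < m) (hε : 0 < ε) (x z : ℝ × ℝ) :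
    IntegrableOn (properTimeDensity m ε x z) (Ioi 0) := by
  have hpi : IsUnit ((2 * π : ℂ) ^ 4) := by simp [pi_ne_zero]
  rw [IntegrableOn, ← integrable_const_mul_iff hpi]
  exact (integrableOn_congr_fun (fun t ht ↦ integral_properTimeIntegrand hε ht x z)
    measurableSet_Ioi).mp (integrable_uncurry_properTimeIntegrand hm hε x z).integral_prod_left

end ProperTime

section LogIntegral

variable {E : Type*} [NormedAddCommGroup E] [NormedSpace ℝ E] {f : ℝ → E} {A B a b μ : ℝ}

theorem norm_integral_le_of_norm_le_div_sqrt (hb : 0 ≤ b)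
    (hf : ∀ t ∈ Ioc 0 b, ‖f t‖ ≤ B / √t) : ‖∫ t in 0..b, f t‖ ≤ 2 * B * √b := by
  have hpow : ∀ t ∈ Ioc 0 b, ‖f t‖ ≤ B * t ^ (-(1 / 2) : ℝ) := fun t ht ↦
    (hf t ht).trans_eq (by rw [rpow_neg ht.1.le, ← sqrt_eq_rpow, div_eq_mul_inv])
  refine (intervalIntegral.norm_integral_le_of_norm_le hb (.of_forall hpow)
    ((intervalIntegral.intervalIntegrable_rpow' (by norm_num)).const_mul B)).trans_eq ?_
  rw [intervalIntegral.integral_const_mul, integral_rpow (.inl (by norm_num)), sqrt_eq_rpow]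
  norm_num
  ring

theorem norm_integral_le_of_norm_le_div (ha : 0 < a) (hab : a ≤ b)
    (hf : ∀ t ∈ Ioc a b, ‖f t‖ ≤ A / t) : ‖∫ t in a..b, f t‖ ≤ A * log (b / a) := by
  have h0 : (0 : ℝ) ∉ uIcc a b := by
    rw [uIcc_of_le hab]
    exact fun h ↦ ha.not_ge h.1
  refine (intervalIntegral.norm_integral_le_of_norm_le hab (g := fun t ↦ A * t⁻¹) (.of_forall hf)
    ((intervalIntegral.intervalIntegrable_inv (fun t ht ↦ ne_of_mem_of_not_mem ht h0)
      continuousOn_id).const_mul A)).trans_eq ?_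
  rw [intervalIntegral.integral_const_mul, integral_inv h0]

theorem norm_integral_Ioi_le_of_norm_le_exp (hμ : 0 < μ)
    (hf : ∀ t ∈ Ioi a, ‖f t‖ ≤ A * exp (-(μ * t))) :
    ‖∫ t in Ioi a, f t‖ ≤ A * exp (-(μ * a)) / μ := by
  have hint : IntegrableOn (fun t ↦ A * exp (-μ * t)) (Ioi a) :=
    (integrableOn_exp_mul_Ioi (neg_lt_zero.mpr hμ) a).const_mul A
  refine (norm_integral_le_of_norm_le hint ((ae_restrict_iff' measurableSet_Ioi).mpr
    (.of_forall fun t ht ↦ (neg_mul μ t).symm ▸ hf t ht))).trans_eq ?_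
  rw [integral_const_mul, integral_exp_mul_Ioi (neg_lt_zero.mpr hμ), neg_div_neg_eq, neg_mul,
    mul_div_assoc]

theorem norm_integral_Ioi_zero_le_log {ρ : ℝ} (hf : IntegrableOn f (Ioi 0)) (hA : 0 ≤ A)
    (hμ : 0 < μ) (hρ : 0 < ρ) (hρ1 : ρ ≤ 1)
    (hexp : ∀ t, 0 < t → ‖f t‖ ≤ A * exp (-(μ * t)) / t)
    (hsqrt : ∀ t, 0 < t → ‖f t‖ ≤ B / ρ / √t) :
    ‖∫ t in Ioi 0, f t‖ ≤ 2 * A * log (1 / ρ) + (2 * B + A / μ) := by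
  have hexp1 {t : ℝ} (ht : 0 < t) : exp (-(μ * t)) ≤ 1 := exp_le_one_iff.mpr (by nlinarith)
  have hsmall : ‖∫ t in 0..ρ ^ 2, f t‖ ≤ 2 * B := by
    refine (norm_integral_le_of_norm_le_div_sqrt (sq_nonneg ρ) fun t ht ↦
      hsqrt t ht.1).trans_eq ?_
    rw [sqrt_sq hρ.le]
    field_simp
  have hmiddle : ‖∫ t in ρ ^ 2..1, f t‖ ≤ A * log (1 / ρ ^ 2) := by
    refine norm_integral_le_of_norm_le_div (by positivity) (pow_le_one₀ hρ.le hρ1)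
      fun t ht ↦ ?_
    have ht0 : 0 < t := (pow_pos hρ 2).trans ht.1
    refine (hexp t ht0).trans ?_
    gcongr
    exact mul_le_of_le_one_right hA (hexp1 ht0)
  have htail : ‖∫ t in Ioi 1, f t‖ ≤ A / μ := by
    refine (norm_integral_Ioi_le_of_norm_le_exp (A := A) hμ fun t ht ↦ ?_).trans ?_
    · have ht1 : 1 < t := ht
      exact (hexp t (by linarith)).trans (div_le_self (by positivity) ht1.le)
    · gcongr
      exact mul_le_of_le_one_right hA (hexp1 one_pos)
  have hint (a b : ℝ) (ha : 0 ≤ a) (hb : 0 ≤ b) : IntervalIntegrable f volume a b :=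
    intervalIntegrable_iff.mpr (hf.mono_set fun t ht ↦ (le_min ha hb).trans_lt ht.1)
  rw [← intervalIntegral.integral_interval_add_Ioi hf (hf.mono_set (Ioi_subset_Ioi zero_le_one)),
    ← intervalIntegral.integral_add_adjacent_intervals (hint 0 (ρ ^ 2) le_rfl (sq_nonneg ρ))
      (hint _ 1 (sq_nonneg ρ) zero_le_one)]
  have hlog : log (1 / ρ ^ 2) = 2 * log (1 / ρ) := by
    rw [← one_div_pow, log_pow]
    norm_num
  rw [hlog] at hmiddle
  linarith [norm_add₃_le (a := ∫ t in 0..ρ ^ 2, f t) (b := ∫ t in ρ ^ 2..1, f t)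
    (c := ∫ t in Ioi 1, f t)]

end LogIntegral

section PointwiseBounds

theorem mul_prod_le_mul_pow {ι : Type*} [Fintype ι] {a : ι → ℝ} {ρ K S : ℝ} {i : ι}
    (hK : 0 ≤ K) (ha : ∀ j, 0 ≤ a j) (haS : ∀ j, a j ≤ S) (hi : ρ * a i ≤ K) :
    ρ * ∏ j, a j ≤ K * S ^ (Fintype.card ι - 1) := by
  classical
  rw [← Finset.mul_prod_erase _ _ (Finset.mem_univ i), ← mul_assoc, ← Finset.card_univ,
    ← Finset.card_erase_of_mem (Finset.mem_univ i), ← Finset.prod_const]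
  exact mul_le_mul hi (Finset.prod_le_prod (fun j _ ↦ ha j) fun j _ ↦ haS j)
    (Finset.prod_nonneg fun j _ ↦ ha j) hK

theorem exists_sqrt_sum_sq_le_sqrt_card_mul_abs {ι : Type*} [Fintype ι] [Nonempty ι] (u : ι → ℝ) :
    ∃ i, √(∑ j, u j ^ 2) ≤ √(Fintype.card ι) * |u i| := by
  obtain ⟨i, -, hi⟩ := Finset.exists_max_image Finset.univ (fun j ↦ u j ^ 2) Finset.univ_nonempty
  refine ⟨i, ?_⟩
  rw [← sqrt_sq_eq_abs, ← sqrt_mul (Nat.cast_nonneg _)]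
  gcongr
  simpa using Finset.sum_le_card_nsmul Finset.univ (fun j ↦ u j ^ 2) (u i ^ 2) hi

/-- The sizes of the four heat kernels in `properTimeDensity`. -/
noncomputable def heatFactors (ε t : ℝ) (x z : ℝ × ℝ) : Fin 4 → ℝ :=
  ![heatKernel t x.1, heatKernel t x.2, ‖latticeHeatKernel ε t z.1‖, ‖latticeHeatKernel ε t z.2‖]

variable {m ε t : ℝ}

theorem heatFactors_nonneg (ε t : ℝ) (x z : ℝ × ℝ) (i : Fin 4) : 0 ≤ heatFactors ε t x z i := by
  fin_cases i <;> simp [heatFactors, heatKernel_nonneg]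

theorem heatFactors_le (hε : 0 < ε) (ht : 0 < t) (x z : ℝ × ℝ) (i : Fin 4) :
    heatFactors ε t x z i ≤ (√(4 * π * t))⁻¹ := by
  fin_cases i
  exacts [heatKernel_le ht _, heatKernel_le ht _, norm_latticeHeatKernel_le hε ht _,
    norm_latticeHeatKernel_le hε ht _]

theorem abs_mul_heatFactors_le_one (hε : 0 < ε) (ht : 0 < t) (x z : ℝ × ℝ) (i : Fin 4) :
    |![x.1, x.2, z.1, z.2] i| * heatFactors ε t x z i ≤ 1 := by
  fin_cases i
  exacts [abs_mul_heatKernel_le_one ht _, abs_mul_heatKernel_le_one ht _,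
    abs_mul_norm_latticeHeatKernel_le_one hε ht.le _,
    abs_mul_norm_latticeHeatKernel_le_one hε ht.le _]

theorem exists_mul_heatFactors_le_one (hε : 0 < ε) (ht : 0 < t) (x z : ℝ × ℝ) :
    ∃ i, max √(x.1 ^ 2 + x.2 ^ 2 + z.1 ^ 2 + z.2 ^ 2) ε / 2 * heatFactors ε t x z i ≤ 1 := by
  rcases max_choice √(x.1 ^ 2 + x.2 ^ 2 + z.1 ^ 2 + z.2 ^ 2) ε with h | h <;> rw [h]
  · obtain ⟨i, hi⟩ := exists_sqrt_sum_sq_le_sqrt_card_mul_abs ![x.1, x.2, z.1, z.2]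
    have hcard : √(Fintype.card (Fin 4) : ℝ) = 2 := sqrt_eq_iff_mul_self_eq_of_pos two_pos |>.mpr
      (by norm_num)
    rw [Fin.sum_univ_four, hcard, ← div_le_iff₀' two_pos] at hi
    exact ⟨i, (mul_le_mul_of_nonneg_right hi (heatFactors_nonneg ..)).trans
      (abs_mul_heatFactors_le_one hε ht x z i)⟩
  · refine ⟨2, le_trans ?_ (mul_norm_latticeHeatKernel_le_one hε ht.le z.1)⟩
    exact mul_le_mul_of_nonneg_right (half_le_self hε.le) (norm_nonneg _)

theorem norm_properTimeDensity (m ε : ℝ) (ht : 0 < t) (x z : ℝ × ℝ) :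
    ‖properTimeDensity m ε x z t‖ = t * exp (-(m ^ 2 * t)) * ∏ i, heatFactors ε t x z i := by
  simp only [properTimeDensity, norm_mul, Fin.prod_univ_four, heatFactors]
  rw [Complex.norm_of_nonneg (by positivity), Complex.norm_of_nonneg (heatKernel_nonneg _ _),
    Complex.norm_of_nonneg (heatKernel_nonneg _ _)]
  simp [mul_assoc]

theorem norm_properTimeDensity_le (m : ℝ) (hε : 0 < ε) (ht : 0 < t) (x z : ℝ × ℝ) :
    ‖properTimeDensity m ε x z t‖ ≤ 1 / (4 * π) ^ 2 * exp (-(m ^ 2 * t)) / t := by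
  have hprod : ∏ i, heatFactors ε t x z i ≤ ((4 * π * t) ^ 2)⁻¹ :=
    calc ∏ i, heatFactors ε t x z i ≤ ∏ _i : Fin 4, (√(4 * π * t))⁻¹ :=
          Finset.prod_le_prod (fun i _ ↦ heatFactors_nonneg ..) fun i _ ↦ heatFactors_le hε ht x z i
      _ = ((4 * π * t) ^ 2)⁻¹ := by
          rw [Fin.prod_const, inv_pow, pow_mul (√_) 2 2, sq_sqrt (by positivity)]
  rw [norm_properTimeDensity m ε ht]
  calc t * exp (-(m ^ 2 * t)) * ∏ i, heatFactors ε t x z i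
      ≤ t * exp (-(m ^ 2 * t)) * ((4 * π * t) ^ 2)⁻¹ := by gcongr
    _ = 1 / (4 * π) ^ 2 * exp (-(m ^ 2 * t)) / t := by field_simp

theorem norm_properTimeDensity_le_div_sqrt {ρ : ℝ} (m : ℝ) (hε : 0 < ε) (ht : 0 < t) (hρ : 0 < ρ)
    (x z : ℝ × ℝ) (hρN : ρ ≤ max √(x.1 ^ 2 + x.2 ^ 2 + z.1 ^ 2 + z.2 ^ 2) ε / 2) :
    ‖properTimeDensity m ε x z t‖ ≤ 1 / ρ / √t := by
  obtain ⟨i, hi⟩ := exists_mul_heatFactors_le_one hε ht x z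
  have hprod : ρ * ∏ j, heatFactors ε t x z j ≤ (√t)⁻¹ ^ 3 :=
    calc ρ * ∏ j, heatFactors ε t x z j ≤ 1 * (√(4 * π * t))⁻¹ ^ 3 :=
          mul_prod_le_mul_pow zero_le_one (heatFactors_nonneg ε t x z) (heatFactors_le hε ht x z)
            ((mul_le_mul_of_nonneg_right hρN (heatFactors_nonneg ..)).trans hi)
      _ ≤ (√t)⁻¹ ^ 3 := by
          rw [one_mul]
          gcongr
          nlinarith [pi_gt_three]
  have hexp : exp (-(m ^ 2 * t)) ≤ 1 := exp_le_one_iff.mpr (neg_nonpos.mpr (by positivity))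
  rw [norm_properTimeDensity m ε ht, div_div, le_div_iff₀ (by positivity)]
  calc t * exp (-(m ^ 2 * t)) * (∏ j, heatFactors ε t x z j) * (ρ * √t)
      = exp (-(m ^ 2 * t)) * (t * √t) * (ρ * ∏ j, heatFactors ε t x z j) := by ring
    _ ≤ 1 * (t * √t) * (√t)⁻¹ ^ 3 :=
        mul_le_mul (by gcongr) hprod
          (mul_nonneg hρ.le (Finset.prod_nonneg fun j _ ↦ heatFactors_nonneg ..)) (by positivity)
    _ = 1 := by
        nth_rw 1 [← sq_sqrt ht.le]
        field_simp

theorem log_one_div_min_half_one_le {N : ℝ} (hN : 0 < N) :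
    log (1 / min (N / 2) 1) ≤ log 2 + max (log (1 / N)) 0 := by
  have : 0 ≤ log 2 := log_nonneg one_le_two
  rcases min_choice (N / 2) 1 with h | h <;> rw [h]
  · rw [one_div_div, div_eq_mul_one_div, log_mul two_ne_zero (by positivity)]
    gcongr
    exact le_max_left _ _
  · rw [one_div_one, log_one]
    positivity

theorem norm_GbarEps_le (hm : 0 < m) (hε : 0 < ε) (x z : ℝ × ℝ) :
    ‖GbarEps m ε x z‖ ≤ 2 / (4 * π) ^ 2 *
        max (log (1 / max √(x.1 ^ 2 + x.2 ^ 2 + z.1 ^ 2 + z.2 ^ 2) ε)) 0 +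
      (2 / (4 * π) ^ 2 * log 2 + (2 + 1 / (4 * π) ^ 2 / m ^ 2)) := by
  set N := max √(x.1 ^ 2 + x.2 ^ 2 + z.1 ^ 2 + z.2 ^ 2) ε
  have hN : 0 < N := hε.trans_le (le_max_right _ _)
  have hρ : 0 < min (N / 2) 1 := by positivity
  calc ‖GbarEps m ε x z‖
      = ‖∫ t in Ioi 0, properTimeDensity m ε x z t‖ := by
        rw [GbarEps_eq_integral_properTimeDensity hm hε]
    _ ≤ 2 * (1 / (4 * π) ^ 2) * log (1 / min (N / 2) 1) +
          (2 * 1 + 1 / (4 * π) ^ 2 / m ^ 2) :=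
        norm_integral_Ioi_zero_le_log (integrableOn_properTimeDensity hm hε x z) (by positivity)
          (by positivity) hρ (min_le_right _ _)
          (fun t ht ↦ norm_properTimeDensity_le m hε ht x z)
          fun t ht ↦ norm_properTimeDensity_le_div_sqrt m hε ht hρ x z (min_le_left _ _)
    _ ≤ 2 * (1 / (4 * π) ^ 2) * (log 2 + max (log (1 / N)) 0) +
          (2 * 1 + 1 / (4 * π) ^ 2 / m ^ 2) := by
        gcongr
        exact log_one_div_min_half_one_le hN
    _ = _ := by ring

end PointwiseBounds

theorem stmt_3_general (m : ℝ) (hm : 0 < m) :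
    ∃ D : ℝ, 0 ≤ D ∧
      ∀ ε : ℝ, 0 < ε → ∀ x z : ℝ × ℝ,
        ‖GbarEps m ε x z‖ ≤
          2 / (4 * π) ^ 2 * max (log (1 / max √(x.1 ^ 2 + x.2 ^ 2 + z.1 ^ 2 + z.2 ^ 2) ε)) 0 + D :=
  ⟨_, by positivity, fun _ hε x z ↦ norm_GbarEps_le hm hε x z⟩

/-- Corollary 3.5: for every `m > 0` and `C > 2/(4π)²` there is a `D ≥ 0`, independent of
`ε`, such that for all `ε ∈ (0,1]` and `(x,z) ∈ ℝ² × ℝ²`,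
`|Ḡ_ε(x,z)| ≤ C log₊(1/(max(√(|x|²+|z|²), ε))) + D`. -/
theorem stmt_3 (m : ℝ) (hm : 0 < m) (C : ℝ) (hC : 2 / (4 * Real.pi) ^ 2 < C) :
    ∃ D : ℝ, 0 ≤ D ∧
      ∀ ε : ℝ, ε ∈ Set.Ioc (0 : ℝ) 1 → ∀ x z : ℝ × ℝ,
        ‖GbarEps m ε x z‖ ≤
          C * max (Real.log (1 /
              max (Real.sqrt (x.1 ^ 2 + x.2 ^ 2 + z.1 ^ 2 + z.2 ^ 2)) ε)) 0 + D := by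
  obtain ⟨D, hD, hbound⟩ := stmt_3_general m hm
  exact ⟨D, hD, fun ε hε x z ↦ (hbound ε hε.1 x z).trans (by gcongr)⟩
end

section
/- For every p ∈ (1,∞) and every ℓ ∈ ℝ there exists a constant C > 0 such that for every ε ∈ (0,1] and every measurable f : ℝ² → ℝ with ‖f‖_{L^p_ℓ(ℝ²)} < ∞, the discretization D^ε f is well defined and ‖D^ε f‖_{L^p_ℓ(εℤ²)} ≤ C ‖f‖_{L^p_ℓ(ℝ²)}. -/
open MeasureTheory
open scoped ENNReal

/-- The polynomial weight `ρ_ℓ(y) = (1+|y|²)^{-ℓ/2}` on `ℝ²`. -/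
noncomputable def rho2 (ℓ : ℝ) (y : ℝ × ℝ) : ℝ := (1 + y.1 ^ 2 + y.2 ^ 2) ^ (-ℓ / 2)

/-- The lattice point `(εn₁, εn₂) ∈ εℤ² ⊂ ℝ²` indexed by `n ∈ ℤ²`. -/
noncomputable def pt (ε : ℝ) (n : ℤ × ℤ) : ℝ × ℝ := (ε * (n.1 : ℝ), ε * (n.2 : ℝ))

/-- The square `Q_ε(z) = (z₁-ε/2, z₁+ε/2] × (z₂-ε/2, z₂+ε/2]`. -/
def Qeps (ε : ℝ) (z : ℝ × ℝ) : Set (ℝ × ℝ) :=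
  Set.Ioc (z.1 - ε / 2) (z.1 + ε / 2) ×ˢ Set.Ioc (z.2 - ε / 2) (z.2 + ε / 2)

/-- The discretization operator `D^ε f(z) = ε⁻² ∫_{Q_ε(z)} f(x) dx`. -/
noncomputable def Deps (ε : ℝ) (f : ℝ × ℝ → ℝ) (n : ℤ × ℤ) : ℝ :=
  (ε ^ 2)⁻¹ * ∫ x in Qeps ε (pt ε n), f x

/-- The index of the cell `Q_ε(z)` containing `t` in one coordinate:
`t ∈ (εn - ε/2, εn + ε/2]` iff `n = ⌈t/ε - 1/2⌉`. -/
noncomputable def cellIdx (ε t : ℝ) : ℤ := ⌈t / ε - 1 / 2⌉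

/-- The extension operator `E^ε`, producing the piecewise constant function with
`E^ε f = f(z)` on `Q_ε(z)`. -/
noncomputable def Eeps (ε : ℝ) (f : ℤ × ℤ → ℝ) (x : ℝ × ℝ) : ℝ :=
  f (cellIdx ε x.1, cellIdx ε x.2)

/-- The weighted norm `‖g‖_{L^p_ℓ(ℝ²)} = (∫_{ℝ²} |ρ_ℓ(x) g(x)|^p dx)^{1/p}`,
valued in `ℝ≥0∞`. -/
noncomputable def lpNormR2 (p ℓ : ℝ) (g : ℝ × ℝ → ℝ) : ℝ≥0∞ :=
  (∫⁻ x : ℝ × ℝ, ENNReal.ofReal (|rho2 ℓ x * g x| ^ p)) ^ (1 / p)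

/-- The weighted lattice norm `‖f‖_{L^p_ℓ(εℤ²)} = (ε² Σ_{z∈εℤ²} |ρ_ℓ(z) f(z)|^p)^{1/p}`,
valued in `ℝ≥0∞`. -/
noncomputable def lpNormLat (p ℓ ε : ℝ) (f : ℤ × ℤ → ℝ) : ℝ≥0∞ :=
  (ENNReal.ofReal (ε ^ 2) *
    ∑' n : ℤ × ℤ, ENNReal.ofReal (|rho2 ℓ (pt ε n) * f n| ^ p)) ^ (1 / p)

/-- The Euclidean length of a point of `ℝ²`. -/
noncomputable def en2 (y : ℝ × ℝ) : ℝ := Real.sqrt (y.1 ^ 2 + y.2 ^ 2)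

/-- The weighted lattice `L^p_ℓ` norm of the difference `f(·+k) − f`. -/
noncomputable def latDiffNorm (p ℓ ε : ℝ) (f : ℤ × ℤ → ℝ) (k : ℤ × ℤ) : ℝ≥0∞ :=
  (ENNReal.ofReal (ε ^ 2) *
    ∑' n : ℤ × ℤ, ENNReal.ofReal (rho2 ℓ (pt ε n) ^ p * |f (n + k) - f n| ^ p)) ^ (1 / p)

/-- The lattice fractional Sobolev norm `‖f‖_{W^{s,p}_ℓ(εℤ²)} = ‖f‖_{L^p_ℓ(εℤ²)} +
sup{ |k|^{-s} ‖f(·+k) − f‖_{L^p_ℓ(εℤ²)} : k ∈ εℤ², 0 < |k| ≤ 1 }`. -/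
noncomputable def latWNorm (s p ℓ ε : ℝ) (f : ℤ × ℤ → ℝ) : ℝ≥0∞ :=
  lpNormLat p ℓ ε f +
    ⨆ (k : ℤ × ℤ) (_ : 0 < en2 (pt ε k) ∧ en2 (pt ε k) ≤ 1),
      ENNReal.ofReal (en2 (pt ε k) ^ (-s)) * latDiffNorm p ℓ ε f k

/-- The difference-quotient norm of the weighted Besov space `B^s_{p,∞,ℓ}(ℝ²)`:
`‖g‖_{L^p_ℓ} + sup{ |h|^{-s} ‖g(·+h) − g‖_{L^p_ℓ} : h ∈ ℝ², 0 < |h| ≤ 1 }`. -/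
noncomputable def besovDiffNormR2 (s p ℓ : ℝ) (g : ℝ × ℝ → ℝ) : ℝ≥0∞ :=
  lpNormR2 p ℓ g +
    ⨆ (h : ℝ × ℝ) (_ : 0 < en2 h ∧ en2 h ≤ 1),
      ENNReal.ofReal (en2 h ^ (-s)) * lpNormR2 p ℓ (fun x => g (x + h) - g x)

/-!
On each cell `Q` of the lattice the weight at the lattice point and the weight at any point of `Q`
are comparable, by Peetre's inequality `ρ_ℓ(z) ≤ (2 (1 + |x - z|²)) ^ (|ℓ| / 2) ρ_ℓ(x)`. The
weighted value of the discretization at a lattice point is therefore controlled by the average over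
`Q` of `ρ_ℓ |f|`, and Jensen's inequality bounds the `p`-th power of that average by the average of
`(ρ_ℓ |f|) ^ p`. Since all cells have volume `ε ^ 2` and are pairwise disjoint, summing over the
lattice yields at most the integral over the plane.
-/

section WeightedAverages

variable {α E ι : Type*} [MeasurableSpace α] {μ : Measure α} [NormedAddCommGroup E]
  {p : ℝ} {a C : ℝ≥0∞} {w g : α → ℝ≥0∞} {f : α → E}

theorem rpow_laverage_le_laverage_rpow (hp : 1 ≤ p) (hg : AEMeasurable g μ) :
    (⨍⁻ x, g x ∂μ) ^ p ≤ ⨍⁻ x, g x ^ p ∂μ := by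
  have hp₀ : 0 < p := by positivity
  have mass_le_one : ((μ Set.univ)⁻¹ • μ) Set.univ ≤ 1 := ENNReal.inv_mul_le_one _
  have avg_le : ⨍⁻ x, g x ∂μ ≤ (⨍⁻ x, g x ^ p ∂μ) ^ (1 / p) := by
    have holder := eLpNorm'_le_eLpNorm'_mul_rpow_measure_univ one_pos hp
      (hg.smul_measure (μ Set.univ)⁻¹).aestronglyMeasurable
    simp only [eLpNorm'_eq_lintegral_enorm, enorm_eq_self, ENNReal.rpow_one, div_one] at holder
    refine holder.trans (mul_le_of_le_one_right' (ENNReal.rpow_le_one mass_le_one ?_))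
    rw [sub_nonneg, one_div]
    exact inv_le_one_of_one_le₀ hp
  rwa [one_div, ENNReal.le_rpow_inv_iff hp₀] at avg_le

theorem rpow_mul_laverage_le_of_ae_le_mul (hp : 1 ≤ p) (hC : C ≠ ⊤)
    (haw : ∀ᵐ x ∂μ, a ≤ C * w x) (hwg : AEMeasurable (fun x => w x * g x) μ) :
    (a * ⨍⁻ x, g x ∂μ) ^ p ≤ C ^ p * ⨍⁻ x, (w x * g x) ^ p ∂μ := by
  have weighted_avg_le : a * ⨍⁻ x, g x ∂μ ≤ C * ⨍⁻ x, w x * g x ∂μ :=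
    calc a * ⨍⁻ x, g x ∂μ
      _ ≤ ⨍⁻ x, a * g x ∂μ := lintegral_const_mul_le _ _
      _ ≤ ⨍⁻ x, C * (w x * g x) ∂μ :=
        laverage_mono_ae <| haw.mono fun x hx =>
          (mul_le_mul_left hx (g x)).trans_eq (mul_assoc C (w x) (g x))
      _ = C * ⨍⁻ x, w x * g x ∂μ := lintegral_const_mul' _ _ hC
  calc (a * ⨍⁻ x, g x ∂μ) ^ p
    _ ≤ (C * ⨍⁻ x, w x * g x ∂μ) ^ p := by gcongr
    _ = C ^ p * (⨍⁻ x, w x * g x ∂μ) ^ p := ENNReal.mul_rpow_of_nonneg _ _ (by positivity)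
    _ ≤ C ^ p * ⨍⁻ x, (w x * g x) ^ p ∂μ := by
      gcongr
      exact rpow_laverage_le_laverage_rpow hp hwg

theorem integrable_of_lintegral_weight_mul_rpow_ne_top [IsFiniteMeasure μ] (hp : 1 ≤ p)
    (hC : C ≠ ⊤) (ha : a ≠ 0) (haw : ∀ᵐ x ∂μ, a ≤ C * w x) (hw : AEMeasurable w μ)
    (hf : AEStronglyMeasurable f μ) (hfin : ∫⁻ x, (w x * ‖f x‖ₑ) ^ p ∂μ ≠ ⊤) :
    Integrable f μ := by
  have hp₀ : 0 < p := by positivity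
  have avg_ne_top : ⨍⁻ x, ‖f x‖ₑ ∂μ ≠ ⊤ := by
    intro avg_eq_top
    have bound := rpow_mul_laverage_le_of_ae_le_mul hp hC haw (hw.mul hf.enorm)
    rw [avg_eq_top, ENNReal.mul_top ha, ENNReal.top_rpow_of_pos hp₀, top_le_iff] at bound
    exact ENNReal.mul_ne_top (ENNReal.rpow_ne_top_of_nonneg hp₀.le hC)
      (laverage_lt_top hfin).ne bound
  refine ⟨hf, ?_⟩
  rw [hasFiniteIntegral_iff_enorm, ← measure_mul_laverage]
  exact ENNReal.mul_lt_top (measure_lt_top _ _) avg_ne_top.lt_top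

theorem tsum_measure_mul_rpow_weight_mul_setAverage_le [NormedSpace ℝ E] [Countable ι]
    {Q : ι → Set α} {v : ι → ℝ≥0∞} (hp : 1 ≤ p) (hC : C ≠ ⊤)
    (hQ : ∀ i, MeasurableSet (Q i)) (hdisj : Pairwise (Function.onFun Disjoint Q))
    (hμQ : ∀ i, μ (Q i) ≠ ⊤) (hvw : ∀ i, ∀ x ∈ Q i, v i ≤ C * w x)
    (hw : AEMeasurable w μ) (hf : AEStronglyMeasurable f μ) :
    ∑' i, μ (Q i) * (v i * ‖⨍ x in Q i, f x ∂μ‖ₑ) ^ p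
      ≤ C ^ p * ∫⁻ x, (w x * ‖f x‖ₑ) ^ p ∂μ := by
  have cell_le (i : ι) : μ (Q i) * (v i * ‖⨍ x in Q i, f x ∂μ‖ₑ) ^ p
      ≤ C ^ p * ∫⁻ x in Q i, (w x * ‖f x‖ₑ) ^ p ∂μ :=
    calc μ (Q i) * (v i * ‖⨍ x in Q i, f x ∂μ‖ₑ) ^ p
      _ ≤ μ (Q i) * (v i * ⨍⁻ x in Q i, ‖f x‖ₑ ∂μ) ^ p := by
        gcongr
        exact enorm_integral_le_lintegral_enorm _
      _ ≤ μ (Q i) * (C ^ p * ⨍⁻ x in Q i, (w x * ‖f x‖ₑ) ^ p ∂μ) := by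
        gcongr
        exact rpow_mul_laverage_le_of_ae_le_mul hp hC (ae_restrict_of_forall_mem (hQ i) (hvw i))
          (hw.mul hf.enorm).restrict
      _ = C ^ p * ∫⁻ x in Q i, (w x * ‖f x‖ₑ) ^ p ∂μ := by
        rw [mul_left_comm, measure_mul_setLAverage _ (hμQ i)]
  calc ∑' i, μ (Q i) * (v i * ‖⨍ x in Q i, f x ∂μ‖ₑ) ^ p
    _ ≤ ∑' i, C ^ p * ∫⁻ x in Q i, (w x * ‖f x‖ₑ) ^ p ∂μ := ENNReal.tsum_le_tsum cell_le
    _ = C ^ p * ∫⁻ x in ⋃ i, Q i, (w x * ‖f x‖ₑ) ^ p ∂μ := by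
      rw [ENNReal.tsum_mul_left, lintegral_iUnion hQ hdisj]
    _ ≤ C ^ p * ∫⁻ x, (w x * ‖f x‖ₑ) ^ p ∂μ := by
      gcongr
      exact Measure.restrict_le_self

end WeightedAverages

section Weight

theorem rpow_le_rpow_abs_mul_rpow {A a b : ℝ} (ha : 0 < a) (hb : 0 < b) (hab : a ≤ A * b)
    (hba : b ≤ A * a) (s : ℝ) : a ^ s ≤ A ^ |s| * b ^ s := by
  have hA : 0 < A := pos_of_mul_pos_left (ha.trans_le hab) hb.le
  rcases le_total 0 s with hs | hs
  · rw [abs_of_nonneg hs, ← Real.mul_rpow hA.le hb.le]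
    exact Real.rpow_le_rpow ha.le hab hs
  · rw [abs_of_nonpos hs, Real.rpow_neg hA.le, ← Real.inv_rpow hA.le,
      ← Real.mul_rpow (inv_nonneg.2 hA.le) hb.le]
    exact Real.rpow_le_rpow_of_nonpos (by positivity) ((inv_mul_le_iff₀ hA).2 hba) hs

theorem one_add_sq_add_sq_le_two_mul (z x : ℝ × ℝ) :
    1 + z.1 ^ 2 + z.2 ^ 2
      ≤ 2 * (1 + (x.1 - z.1) ^ 2 + (x.2 - z.2) ^ 2) * (1 + x.1 ^ 2 + x.2 ^ 2) := by
  have parallelogram_fst := sq_nonneg (2 * x.1 - z.1)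
  have parallelogram_snd := sq_nonneg (2 * x.2 - z.2)
  have cross : 0 ≤ ((x.1 - z.1) ^ 2 + (x.2 - z.2) ^ 2) * (x.1 ^ 2 + x.2 ^ 2) := by positivity
  linarith

theorem rho2_le_mul_rho2 (ℓ : ℝ) (z x : ℝ × ℝ) :
    rho2 ℓ z ≤ (2 * (1 + (x.1 - z.1) ^ 2 + (x.2 - z.2) ^ 2)) ^ (|ℓ| / 2) * rho2 ℓ x := by
  have exponent : |ℓ| / 2 = |-ℓ / 2| := by rw [abs_div, abs_neg, abs_two]
  rw [exponent]
  refine rpow_le_rpow_abs_mul_rpow (by positivity) (by positivity)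
    (one_add_sq_add_sq_le_two_mul z x) ?_ _
  rw [sub_sq_comm x.1, sub_sq_comm x.2]
  exact one_add_sq_add_sq_le_two_mul x z

theorem rho2_pos (ℓ : ℝ) (y : ℝ × ℝ) : 0 < rho2 ℓ y :=
  Real.rpow_pos_of_pos (by positivity) _

theorem measurable_rho2 (ℓ : ℝ) : Measurable (rho2 ℓ) := by
  unfold rho2
  fun_prop

theorem ofReal_abs_rho2_mul_rpow {p : ℝ} (hp : 0 ≤ p) (ℓ : ℝ) (y : ℝ × ℝ) (t : ℝ) :
    ENNReal.ofReal (|rho2 ℓ y * t| ^ p) = (‖rho2 ℓ y‖ₑ * ‖t‖ₑ) ^ p := by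
  rw [← ENNReal.ofReal_rpow_of_nonneg (abs_nonneg _) hp, ← Real.enorm_eq_ofReal_abs, enorm_mul]

end Weight

section Cells

variable {ε : ℝ}

theorem measurableSet_Qeps (ε : ℝ) (z : ℝ × ℝ) : MeasurableSet (Qeps ε z) :=
  measurableSet_Ioc.prod measurableSet_Ioc

theorem volume_Qeps (hε : 0 ≤ ε) (z : ℝ × ℝ) : volume (Qeps ε z) = ENNReal.ofReal (ε ^ 2) := by
  have side_length (t : ℝ) : t + ε / 2 - (t - ε / 2) = ε := by ring
  rw [Qeps, Measure.volume_eq_prod, Measure.prod_prod, Real.volume_Ioc, Real.volume_Ioc,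
    side_length, side_length, ← ENNReal.ofReal_mul hε, sq]

theorem cellIdx_eq_iff (hε : 0 < ε) {t : ℝ} {n : ℤ} :
    cellIdx ε t = n ↔ t ∈ Set.Ioc (ε * n - ε / 2) (ε * n + ε / 2) := by
  have lower : (n : ℝ) - 1 < t / ε - 1 / 2 ↔ ε * n - ε / 2 < t := by
    rw [lt_sub_iff_add_lt, lt_div_iff₀ hε]
    ring_nf
  have upper : t / ε - 1 / 2 ≤ n ↔ t ≤ ε * n + ε / 2 := by
    rw [sub_le_iff_le_add, div_le_iff₀ hε]
    ring_nf
  rw [cellIdx, Int.ceil_eq_iff, lower, upper, Set.mem_Ioc]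

theorem Qeps_pt_eq_preimage_cellIdx (hε : 0 < ε) (n : ℤ × ℤ) :
    Qeps ε (pt ε n) = (fun x : ℝ × ℝ => (cellIdx ε x.1, cellIdx ε x.2)) ⁻¹' {n} := by
  ext x
  simp only [Set.mem_preimage, Set.mem_singleton_iff, Prod.ext_iff, cellIdx_eq_iff hε]
  rfl

theorem pairwise_disjoint_Qeps_pt (hε : 0 < ε) :
    Pairwise (Function.onFun Disjoint fun n : ℤ × ℤ => Qeps ε (pt ε n)) := by
  simpa only [Qeps_pt_eq_preimage_cellIdx hε] using pairwise_disjoint_fiber _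

theorem Deps_eq_setAverage (hε : 0 ≤ ε) (f : ℝ × ℝ → ℝ) (n : ℤ × ℤ) :
    Deps ε f n = ⨍ x in Qeps ε (pt ε n), f x := by
  rw [setAverage_eq, measureReal_def, volume_Qeps hε, ENNReal.toReal_ofReal (sq_nonneg ε),
    smul_eq_mul, Deps]

theorem rho2_le_mul_rho2_of_mem_Qeps {ε₀ : ℝ} (hε : ε ≤ ε₀) (ℓ : ℝ) {z x : ℝ × ℝ}
    (hx : x ∈ Qeps ε z) : rho2 ℓ z ≤ (2 + ε₀ ^ 2) ^ (|ℓ| / 2) * rho2 ℓ x := by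
  obtain ⟨⟨left_lt, le_right⟩, ⟨bottom_lt, le_top⟩⟩ := hx
  have fst_sq_le : (x.1 - z.1) ^ 2 ≤ (ε₀ / 2) ^ 2 := sq_le_sq' (by linarith) (by linarith)
  have snd_sq_le : (x.2 - z.2) ^ 2 ≤ (ε₀ / 2) ^ 2 := sq_le_sq' (by linarith) (by linarith)
  have hρ := (rho2_pos ℓ x).le
  refine (rho2_le_mul_rho2 ℓ z x).trans ?_
  gcongr
  linarith

theorem enorm_rho2_le_of_mem_Qeps {ε₀ : ℝ} (hε : ε ≤ ε₀) (ℓ : ℝ) {z x : ℝ × ℝ}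
    (hx : x ∈ Qeps ε z) :
    ‖rho2 ℓ z‖ₑ ≤ ENNReal.ofReal ((2 + ε₀ ^ 2) ^ (|ℓ| / 2)) * ‖rho2 ℓ x‖ₑ := by
  rw [Real.enorm_of_nonneg (rho2_pos ℓ z).le, Real.enorm_of_nonneg (rho2_pos ℓ x).le,
    ← ENNReal.ofReal_mul (by positivity)]
  exact ENNReal.ofReal_le_ofReal (rho2_le_mul_rho2_of_mem_Qeps hε ℓ hx)

end Cells

section Discretization

variable {p ε ε₀ : ℝ} {f : ℝ × ℝ → ℝ}

theorem lpNormR2_eq_lintegral_enorm (hp : 0 ≤ p) (ℓ : ℝ) (f : ℝ × ℝ → ℝ) :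
    lpNormR2 p ℓ f = (∫⁻ x, (‖rho2 ℓ x‖ₑ * ‖f x‖ₑ) ^ p) ^ (1 / p) := by
  simp only [lpNormR2, ofReal_abs_rho2_mul_rpow hp]

theorem integrableOn_Qeps_of_lpNormR2_lt_top (hp : 1 ≤ p) (hε : 0 ≤ ε) {ℓ : ℝ} (z : ℝ × ℝ)
    (hf : AEMeasurable f) (hfin : lpNormR2 p ℓ f < ⊤) : IntegrableOn f (Qeps ε z) := by
  have hp₀ : 0 < p := by positivity
  have : IsFiniteMeasure (volume.restrict (Qeps ε z)) :=
    isFiniteMeasure_restrict.2 (volume_Qeps hε z ▸ ENNReal.ofReal_ne_top)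
  rw [lpNormR2_eq_lintegral_enorm hp₀.le, ENNReal.rpow_lt_top_iff_of_pos (by positivity)] at hfin
  exact integrable_of_lintegral_weight_mul_rpow_ne_top hp ENNReal.ofReal_ne_top
    (enorm_ne_zero.2 (rho2_pos ℓ z).ne')
    (ae_restrict_of_forall_mem (measurableSet_Qeps ε z) fun _ => enorm_rho2_le_of_mem_Qeps le_rfl ℓ)
    (measurable_rho2 ℓ).enorm.aemeasurable hf.aestronglyMeasurable.restrict
    ((setLIntegral_le_lintegral _ _).trans_lt hfin).ne

theorem lpNormLat_Deps_le (hp : 1 ≤ p) (hε : ε ∈ Set.Ioc 0 ε₀) (ℓ : ℝ) (hf : AEMeasurable f) :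
    lpNormLat p ℓ ε (Deps ε f)
      ≤ ENNReal.ofReal ((2 + ε₀ ^ 2) ^ (|ℓ| / 2)) * lpNormR2 p ℓ f := by
  have hp₀ : 0 < p := by positivity
  have volume_cell (n : ℤ × ℤ) := volume_Qeps hε.1.le (pt ε n)
  have sum_le := tsum_measure_mul_rpow_weight_mul_setAverage_le hp ENNReal.ofReal_ne_top
    (fun n => measurableSet_Qeps ε (pt ε n)) (pairwise_disjoint_Qeps_pt hε.1)
    (fun n => volume_cell n ▸ ENNReal.ofReal_ne_top)
    (fun n _ => enorm_rho2_le_of_mem_Qeps hε.2 ℓ (z := pt ε n))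
    (measurable_rho2 ℓ).enorm.aemeasurable hf.aestronglyMeasurable
  simp only [volume_cell, ENNReal.tsum_mul_left] at sum_le
  simp only [lpNormLat, ofReal_abs_rho2_mul_rpow hp₀.le, Deps_eq_setAverage hε.1.le]
  rw [lpNormR2_eq_lintegral_enorm hp₀.le, one_div, ENNReal.rpow_inv_le_iff hp₀,
    ENNReal.mul_rpow_of_nonneg _ _ hp₀.le, ENNReal.rpow_inv_rpow hp₀.ne']
  exact sum_le

end Discretization

theorem stmt_6_general (ℓ ε₀ : ℝ) :
    ∃ C : ℝ, 0 < C ∧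
      ∀ p : ℝ, 1 ≤ p → ∀ ε : ℝ, ε ∈ Set.Ioc (0 : ℝ) ε₀ → ∀ f : ℝ × ℝ → ℝ, AEMeasurable f →
        lpNormR2 p ℓ f < ⊤ →
        (∀ n : ℤ × ℤ, IntegrableOn f (Qeps ε (pt ε n))) ∧
          lpNormLat p ℓ ε (Deps ε f) ≤ ENNReal.ofReal C * lpNormR2 p ℓ f :=
  ⟨(2 + ε₀ ^ 2) ^ (|ℓ| / 2), by positivity, fun _ hp _ hε _ hf hfin =>
    ⟨fun n => integrableOn_Qeps_of_lpNormR2_lt_top hp hε.1.le (pt _ n) hf hfin,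
      lpNormLat_Deps_le hp hε ℓ hf⟩⟩

/-- Lemma 2.22 (first part): for every `p ∈ (1,∞)` and `ℓ ∈ ℝ` there is `C > 0` such
that for every `ε ∈ (0,1]` and every measurable `f : ℝ² → ℝ` with finite `L^p_ℓ(ℝ²)`
norm, the discretization `D^ε f` is well defined and
`‖D^ε f‖_{L^p_ℓ(εℤ²)} ≤ C ‖f‖_{L^p_ℓ(ℝ²)}`. -/
theorem stmt_6 (p ℓ : ℝ) (hp : 1 < p) :
    ∃ C : ℝ, 0 < C ∧
      ∀ ε : ℝ, ε ∈ Set.Ioc (0 : ℝ) 1 → ∀ f : ℝ × ℝ → ℝ, Measurable f →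
        lpNormR2 p ℓ f < ⊤ →
        (∀ n : ℤ × ℤ, IntegrableOn f (Qeps ε (pt ε n))) ∧
          lpNormLat p ℓ ε (Deps ε f) ≤ ENNReal.ofReal C * lpNormR2 p ℓ f :=
  let ⟨C, hC, bound⟩ := stmt_6_general ℓ 1
  ⟨C, hC, fun ε hε f hf => bound p hp.le ε hε f hf.aemeasurable⟩
end
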